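/- arXiv:1901.01993 — 2 statements merged into one kernel-verified Lean document; each statement's English description precedes it below -/
import Mathlib

section
/- (Berkovich–Grizzell) Let L > 0 be an integer, let y > 1 be an odd integer, and let x be an integer with 1 < x ≤ y + 2. In the ring of formal power series over ℚ in one variable q, write a(L,x,y,n) for the coefficients of (∏_{j=0}^{L−1} (1 − q^{1+j(2y+2)})(1 − q^{x+j(2y+2)})(1 − q^{2y+j(2y+2)}))⁻¹ − (∏_{j=0}^{L−1} (1 − q^{2+j(2y+2)})(1 − q^{y+j(2y+2)})(1 − q^{2y+1+j(2y+2)}))⁻¹ = Σ_{n≥0} a(L,x,y,n) q^n. Then a(L,x,y,n) ≥ 0 for all n ≥ 0. -/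
open PowerSeries


namespace BG

/-- coefficientwise nonnegative -/
def Nn (f : PowerSeries ℚ) : Prop := ∀ n, 0 ≤ coeff n f

lemma Nn.add {f g : PowerSeries ℚ} (hf : Nn f) (hg : Nn g) : Nn (f + g) := by
  intro n; rw [map_add]; exact add_nonneg (hf n) (hg n)

lemma Nn.mul {f g : PowerSeries ℚ} (hf : Nn f) (hg : Nn g) : Nn (f * g) := by
  intro n; rw [coeff_mul]; exact Finset.sum_nonneg fun i _ => mul_nonneg (hf _) (hg _)

lemma Nn.X (k : ℕ) : Nn ((X : PowerSeries ℚ) ^ k) := by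
  intro n; rw [coeff_X_pow]; split_ifs <;> norm_num

lemma Nn.one : Nn 1 := by simpa using Nn.X 0

lemma Nn.zero : Nn 0 := by intro n; simp

lemma Nn.C {c : ℚ} (hc : 0 ≤ c) : Nn (PowerSeries.C c) := by
  intro n; rw [coeff_C]; split_ifs <;> simp [hc]

lemma Nn.prod {s : Finset ℕ} {f : ℕ → PowerSeries ℚ} (h : ∀ i ∈ s, Nn (f i)) :
    Nn (∏ i ∈ s, f i) := by
  classical
  induction s using Finset.induction_on with
  | empty => simpa using Nn.one
  | insert a s ha ih =>
    rw [Finset.prod_insert ha]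
    exact (h a (by simp)).mul (ih fun i hi => h i (by simp [hi]))

/-- 1/(1-q^k) -/
noncomputable def I (k : ℕ) : PowerSeries ℚ := (1 - X ^ k)⁻¹

lemma I_mul {k : ℕ} (hk : 0 < k) : I k * (1 - X ^ k) = 1 := by
  apply PowerSeries.inv_mul_cancel
  simp [hk.ne']

lemma coeff_I_rec (F : PowerSeries ℚ) {k : ℕ} (hk : 0 < k) (n : ℕ) :
    coeff n (F * I k) = coeff n F + if k ≤ n then coeff (n - k) (F * I k) else 0 := by
  have h : F * I k = F + F * I k * X ^ k := by
    linear_combination (F) * I_mul hk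
  conv_lhs => rw [h]
  rw [map_add, coeff_mul_X_pow']

lemma Nn.I {k : ℕ} (hk : 0 < k) : Nn (I k) := by
  intro n
  induction n using Nat.strong_induction_on with
  | _ n ih =>
    have := coeff_I_rec 1 hk n
    rw [one_mul] at this
    rw [this]
    apply add_nonneg (Nn.one n)
    split_ifs with h
    · exact ih _ (by omega)
    · exact le_rfl

/-- geometric sum factor -/
noncomputable def G (k : ℕ) : PowerSeries ℚ := ∑ i ∈ Finset.range k, X ^ i

lemma Nn.G (k : ℕ) : Nn (G k) := by
  intro n; rw [BG.G, map_sum]; exact Finset.sum_nonneg fun i _ => Nn.X i n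

lemma G_mul (k : ℕ) : G k * (1 - X) = 1 - X ^ k := by
  have := geom_sum_mul (X : PowerSeries ℚ) k
  rw [G]; linear_combination -this

/-- dominance -/
def Dm (A B : PowerSeries ℚ) : Prop := Nn (I 1 * (B - A))

lemma Dm.refl (A) : Dm A A := by rw [Dm, sub_self, mul_zero]; exact Nn.zero
lemma Dm.trans {A B C} (h : Dm A B) (h' : Dm B C) : Dm A C := by
  have := Nn.add h h'
  rw [Dm]; convert this using 1; ring
lemma Dm.mul {A B C D} (h : Dm A B) (h' : Dm C D) (hA : Nn A) (hD : Nn D) :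
    Dm (A * C) (B * D) := by
  have := (Nn.mul h hD).add (hA.mul h')
  rw [Dm]; convert this using 1; ring
lemma Dm.of_Nn {A B} (h : Nn (B - A)) : Dm A B := (Nn.I one_pos).mul h

lemma Dm.I {l r : ℕ} (hl : 0 < l) (h : l ≤ r) : Dm (I r) (I l) := by
  have e : BG.I 1 * (BG.I l - BG.I r) = X ^ l * G (r - l) * BG.I l * BG.I r := by
    have h1 := I_mul one_pos
    have h2 := I_mul hl
    have h3 := I_mul (hl.trans_le h)
    have h4 := G_mul (r - l)
    have h5 : (X : PowerSeries ℚ) ^ r = X ^ l * X ^ (r - l) := by rw [← pow_add]; congr 1; omega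
    rw [pow_one] at h1
    rw [h5] at h3
    have h6 : BG.I l - BG.I r = BG.I l * BG.I r * (X ^ l * (1 - X ^ (r - l))) := by
      linear_combination BG.I r * h2 - BG.I l * h3
    rw [h6, ← h4]
    linear_combination (BG.I l * BG.I r * X ^ l * G (r - l)) * h1
  rw [Dm, e]
  exact (((Nn.X l).mul (Nn.G _)).mul (Nn.I hl)).mul (Nn.I (hl.trans_le h))

lemma coeff_I1 (n : ℕ) : coeff n (I 1) = 1 := by
  induction n with
  | zero => have := coeff_I_rec 1 one_pos 0; simpa using this
  | succ n ih =>
    have := coeff_I_rec 1 one_pos (n + 1)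
    rw [one_mul] at this
    rw [this]; simp [ih, coeff_one]

end BG
namespace BG

noncomputable def ff (y j : ℕ) : PowerSeries ℚ :=
  I (1 + j * (2 * y + 2)) * (I (y + 2 + j * (2 * y + 2)) * I (2 * y + j * (2 * y + 2)))
noncomputable def gg (y j : ℕ) : PowerSeries ℚ :=
  I (2 + j * (2 * y + 2)) * (I (y + j * (2 * y + 2)) * I (2 * y + 1 + j * (2 * y + 2)))
noncomputable def HH (y : ℕ) : PowerSeries ℚ := I 1 * I (y - 1) * I y

lemma Nn.ff {y : ℕ} (hy : 1 < y) (j : ℕ) : Nn (ff y j) :=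
  (Nn.I (by omega)).mul ((Nn.I (by omega)).mul (Nn.I (by omega)))
lemma Nn.gg {y : ℕ} (hy : 1 < y) (j : ℕ) : Nn (gg y j) :=
  (Nn.I (by omega)).mul ((Nn.I (by omega)).mul (Nn.I (by omega)))
lemma Nn.HH {y : ℕ} (hy : 1 < y) : Nn (HH y) :=
  ((Nn.I (by omega)).mul (Nn.I (by omega))).mul (Nn.I (by omega))

lemma inv_diff {R : Type*} [CommRing R] (a b c d e f a' b' c' d' e' f' : R)
    (ha : a * a' = 1) (hb : b * b' = 1) (hc : c * c' = 1)
    (hd : d * d' = 1) (he : e * e' = 1) (hf : f * f' = 1) :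
    a * (b * c) - d * (e * f) = a * (b * c) * (d * (e * f)) * (d' * e' * f' - a' * b' * c') := by
  have h1 : a * (b * c) * (a' * b' * c') = 1 := by
    linear_combination (b * b' * c * c') * ha + (c * c') * hb + hc
  have h2 : d * (e * f) * (d' * e' * f') = 1 := by
    linear_combination (e * e' * f * f') * hd + (f * f') * he + hf
  linear_combination (d * (e * f)) * h1 - (a * (b * c)) * h2

lemma step_H {y : ℕ} (hy : 1 < y) (j : ℕ) : Nn (HH y * (ff y j - gg y j)) := by
  obtain ⟨k, rfl⟩ : ∃ k, y = k + 1 := ⟨y - 1, by omega⟩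
  have e := inv_diff _ _ _ _ _ _ _ _ _ _ _ _
    (I_mul (k := 1 + j * (2 * (k+1) + 2)) (by omega))
    (I_mul (k := (k+1) + 2 + j * (2 * (k+1) + 2)) (by omega))
    (I_mul (k := 2 * (k+1) + j * (2 * (k+1) + 2)) (by omega))
    (I_mul (k := 2 + j * (2 * (k+1) + 2)) (by omega))
    (I_mul (k := (k+1) + j * (2 * (k+1) + 2)) (by omega))
    (I_mul (k := 2 * (k+1) + 1 + j * (2 * (k+1) + 2)) (by omega))
  have h1 := I_mul one_pos
  have h2 := I_mul (k := k) (by omega)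
  have h3 := I_mul (k := k + 1) (by omega)
  have key : HH (k+1) * (ff (k+1) j - gg (k+1) j) = ff (k+1) j * gg (k+1) j *
      (X ^ (1 + j * (2 * (k+1) + 2)) * (1 + X ^ (j * (2 * (k+1) + 2) + (k+1) + 1))) := by
    rw [ff, gg, e, HH]
    simp only [Nat.add_sub_cancel]
    generalize I (1 + j * (2 * (k+1) + 2)) * (I ((k+1) + 2 + j * (2 * (k+1) + 2)) * I (2 * (k+1) + j * (2 * (k+1) + 2))) = F
    generalize I (2 + j * (2 * (k+1) + 2)) * (I ((k+1) + j * (2 * (k+1) + 2)) * I (2 * (k+1) + 1 + j * (2 * (k+1) + 2))) = Gx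
    generalize I 1 = i1 at *
    generalize I k = i2 at *
    generalize I (k+1) = i3 at *
    have hprod : i1 * i2 * i3 * ((1 - X ^ 1) * (1 - X ^ k) * (1 - X ^ (k+1))) = 1 := by
      linear_combination (i2 * i3 * (1 - X ^ k) * (1 - X ^ (k+1))) * h1 + (i3 * (1 - X ^ (k+1))) * h2 + h3
    have hpoly : ((1 - X ^ (2 + j * (2 * (k+1) + 2))) * (1 - X ^ ((k+1) + j * (2 * (k+1) + 2))) * (1 - X ^ (2 * (k+1) + 1 + j * (2 * (k+1) + 2))) -
       (1 - X ^ (1 + j * (2 * (k+1) + 2))) * (1 - X ^ ((k+1) + 2 + j * (2 * (k+1) + 2))) * (1 - X ^ (2 * (k+1) + j * (2 * (k+1) + 2))) : PowerSeries ℚ)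
       = ((1 - X ^ 1) * (1 - X ^ k) * (1 - X ^ (k+1))) * (X ^ (1 + j * (2 * (k+1) + 2)) * (1 + X ^ (j * (2 * (k+1) + 2) + (k+1) + 1))) := by
      generalize j * (2 * (k+1) + 2) = m
      simp only [pow_add, pow_mul', pow_one]
      ring
    rw [hpoly]
    linear_combination (F * Gx * (X ^ (1 + j * (2 * (k+1) + 2)) * (1 + X ^ (j * (2 * (k+1) + 2) + (k+1) + 1)))) * hprod
  rw [key]
  exact ((Nn.ff hy j).mul (Nn.gg hy j)).mul ((Nn.X _).mul (Nn.one.add (Nn.X _)))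

noncomputable def Ph (y s m : ℕ) : PowerSeries ℚ := ∏ j ∈ Finset.range m, ff y (s + j)
noncomputable def Ga (y s m : ℕ) : PowerSeries ℚ := ∏ j ∈ Finset.range m, gg y (s + j)

lemma Nn.Ph {y : ℕ} (hy : 1 < y) (s m : ℕ) : Nn (Ph y s m) := Nn.prod fun _ _ => Nn.ff hy _
lemma Nn.Ga {y : ℕ} (hy : 1 < y) (s m : ℕ) : Nn (Ga y s m) := Nn.prod fun _ _ => Nn.gg hy _

lemma prop_I {y : ℕ} (hy : 1 < y) (s m : ℕ) : Nn (HH y * (Ph y s m - Ga y s m)) := by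
  induction m with
  | zero => simpa [Ph, Ga] using Nn.zero
  | succ m ih =>
    have e : HH y * (Ph y s (m+1) - Ga y s (m+1)) =
      HH y * (Ph y s m - Ga y s m) * ff y (s+m) + Ga y s m * (HH y * (ff y (s+m) - gg y (s+m))) := by
      simp only [Ph, Ga, Finset.prod_range_succ]; ring
    rw [e]
    exact (ih.mul (Nn.ff hy _)).add ((Nn.Ga hy _ _).mul (step_H hy _))

lemma prop_II' {y : ℕ} (hy : 1 < y) (s m : ℕ) :
    Dm (Ga y s m * I (y + (s + m) * (2 * y + 2))) (Ph y s m * I (y + s * (2 * y + 2))) := by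
  induction m with
  | zero => simpa [Ph, Ga] using Dm.refl _
  | succ m ih =>
    have h1 : Dm (I (2 + (s+m) * (2 * y + 2)) * (I (2 * y + 1 + (s+m) * (2 * y + 2)) * I (y + (s + (m+1)) * (2 * y + 2))))
       (I (1 + (s+m) * (2 * y + 2)) * (I (2 * y + (s+m) * (2 * y + 2)) * I (y + 2 + (s+m) * (2 * y + 2)))) := by
      refine Dm.mul (Dm.I (by omega) (by omega)) (Dm.mul (Dm.I (by omega) (by omega)) (Dm.I (by omega) ?_) (Nn.I (by omega)) (Nn.I (by omega))) (Nn.I (by omega)) ((Nn.I (by omega)).mul (Nn.I (by omega)))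
      have : (s + (m+1)) * (2*y+2) = (s+m) * (2*y+2) + (2*y+2) := by ring
      omega
    have h2 := Dm.mul ih h1 ((Nn.Ga hy _ _).mul (Nn.I (by omega))) ((Nn.I (by omega)).mul ((Nn.I (by omega)).mul (Nn.I (by omega))))
    convert h2 using 1
    · simp only [Ga, gg, Finset.prod_range_succ]; ring
    · simp only [Ph, ff, Finset.prod_range_succ]; ring

lemma Dm_I_one {k : ℕ} (hk : 0 < k) : Dm 1 (I k) := by
  apply Dm.of_Nn
  have : I k - 1 = X ^ k * I k := by linear_combination I_mul hk
  rw [this]; exact (Nn.X _).mul (Nn.I hk)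

lemma prop_II {y : ℕ} (hy : 1 < y) (s m : ℕ) :
    Dm (Ga y s m) (I (y + s * (2 * y + 2)) * Ph y s m) := by
  have h1 : Dm (Ga y s m * 1) (Ga y s m * I (y + (s + m) * (2 * y + 2))) :=
    Dm.mul (Dm.refl _) (Dm_I_one (by omega)) (Nn.Ga hy _ _) (Nn.I (by omega))
  have h2 := h1.trans (prop_II' hy s m)
  rwa [mul_one, mul_comm (Ph y s m)] at h2

lemma finish {y : ℕ} (hy : 1 < y) (m : ℕ) (P p A : PowerSeries ℚ) (hP : Nn P) (hp : Nn p)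
    (hA : Dm (Ga y 1 m) (A * Ph y 1 m))
    (ha : Nn (P * HH y + p * I 1 - gg y 0)) (hb : Nn (ff y 0 - P * HH y - p * I 1 * A)) :
    Nn (ff y 0 * Ph y 1 m - gg y 0 * Ga y 1 m) := by
  have h := (((hb.mul (Nn.Ph hy 1 m)).add (hP.mul (prop_I hy 1 m))).add (hp.mul hA)).add
    (ha.mul (Nn.Ga hy 1 m))
  convert h using 1; ring

lemma I_finish {y x : ℕ} (hy : 1 < y) (hx1 : 1 < x) (hx2 : x ≤ y + 2) (m : ℕ)
    (h : Nn (ff y 0 * Ph y 1 m - gg y 0 * Ga y 1 m)) :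
    Nn ((∏ j ∈ Finset.range (m+1), (I (1 + j * (2 * y + 2)) * (I (x + j * (2 * y + 2)) * I (2 * y + j * (2 * y + 2)))))
      - ∏ j ∈ Finset.range (m+1), gg y j) := by
  have hd : ∀ k, Dm (∏ j ∈ Finset.range k, I (y + 2 + j * (2 * y + 2))) (∏ j ∈ Finset.range k, I (x + j * (2 * y + 2))) := by
    intro k
    induction k with
    | zero => simpa using Dm.refl _
    | succ k ih =>
      rw [Finset.prod_range_succ, Finset.prod_range_succ]
      exact Dm.mul ih (Dm.I (by omega) (by omega)) (Nn.prod fun _ _ => Nn.I (by omega)) (Nn.I (by omega))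
  have hN : Nn ((∏ j ∈ Finset.range m, I (1 + (j+1) * (2 * y + 2))) * ∏ j ∈ Finset.range (m+1), I (2 * y + j * (2 * y + 2))) :=
    (Nn.prod fun _ _ => Nn.I (by omega)).mul (Nn.prod fun _ _ => Nn.I (by omega))
  have h2 := (Nn.mul (hd (m+1)) hN).add h
  convert h2 using 1
  have e1 : ∀ z, (∏ j ∈ Finset.range (m+1), (I (1 + j * (2 * y + 2)) * (I (z + j * (2 * y + 2)) * I (2 * y + j * (2 * y + 2)))))
     = I 1 * (∏ j ∈ Finset.range (m+1), I (z + j * (2 * y + 2))) * ((∏ j ∈ Finset.range m, I (1 + (j+1) * (2 * y + 2))) * ∏ j ∈ Finset.range (m+1), I (2 * y + j * (2 * y + 2))) := by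
    intro z
    rw [Finset.prod_mul_distrib, Finset.prod_mul_distrib, Finset.prod_range_succ' (fun j => I (1 + j * (2 * y + 2)))]
    simp only [zero_mul, add_zero]; ring
  have e2 : ff y 0 * Ph y 1 m = ∏ j ∈ Finset.range (m+1), (I (1 + j * (2 * y + 2)) * (I (y + 2 + j * (2 * y + 2)) * I (2 * y + j * (2 * y + 2)))) := by
    rw [Finset.prod_range_succ', mul_comm]
    simp only [Ph, ff, add_comm 1]
  have e3 : gg y 0 * Ga y 1 m = ∏ j ∈ Finset.range (m+1), gg y j := by
    rw [Finset.prod_range_succ', mul_comm]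
    simp only [Ga, add_comm 1]
  rw [e2, e3, e1, e1]; ring

lemma inv_prod (L a b c M : ℕ) (ha : 0 < a) (hb : 0 < b) (hc : 0 < c) :
    (∏ j ∈ Finset.range L,
          (1 - (PowerSeries.X : PowerSeries ℚ) ^ (a + j * M)) *
          ((1 - (PowerSeries.X : PowerSeries ℚ) ^ (b + j * M)) *
           (1 - (PowerSeries.X : PowerSeries ℚ) ^ (c + j * M))))⁻¹
    = ∏ j ∈ Finset.range L, (I (a + j * M) * (I (b + j * M) * I (c + j * M))) := by
  have h : (∏ j ∈ Finset.range L, (I (a + j * M) * (I (b + j * M) * I (c + j * M)))) * (∏ j ∈ Finset.range L,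
          (1 - (PowerSeries.X : PowerSeries ℚ) ^ (a + j * M)) *
          ((1 - (PowerSeries.X : PowerSeries ℚ) ^ (b + j * M)) *
           (1 - (PowerSeries.X : PowerSeries ℚ) ^ (c + j * M)))) = 1 := by
    rw [← Finset.prod_mul_distrib]
    apply Finset.prod_eq_one
    intro j _
    have h1 := I_mul (k := a + j * M) (by omega)
    have h2 := I_mul (k := b + j * M) (by omega)
    have h3 := I_mul (k := c + j * M) (by omega)
    calc _ = (I (a + j * M) * (1 - X ^ (a + j * M))) * ((I (b + j * M) * (1 - X ^ (b + j * M))) * (I (c + j * M) * (1 - X ^ (c + j * M)))) := by ring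
      _ = 1 := by rw [h1, h2, h3]; ring
  symm
  rw [PowerSeries.eq_inv_iff_mul_eq_one]
  · exact h
  · intro h0
    have := congrArg constantCoeff h
    rw [map_mul, h0, mul_zero, map_one] at this
    exact zero_ne_one this

end BG
namespace BG

lemma coeff_I1I {k : ℕ} (hk : 0 < k) (n : ℕ) : coeff n (I 1 * I k) = ((n / k + 1 : ℕ) : ℚ) := by
  induction n using Nat.strong_induction_on with
  | _ n ih =>
    rw [coeff_I_rec _ hk, coeff_I1]
    split_ifs with h
    · rw [ih _ (by omega), Nat.div_eq n k, if_pos ⟨hk, h⟩]; push_cast; ring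
    · rw [Nat.div_eq_of_lt (by omega)]; simp

lemma coeff_Ik {k : ℕ} (hk : 0 < k) (n : ℕ) : coeff n (I k) = if k ∣ n then 1 else 0 := by
  induction n using Nat.strong_induction_on with
  | _ n ih =>
    have := coeff_I_rec 1 hk n
    rw [one_mul] at this
    rw [this, coeff_one]
    by_cases h : k ≤ n
    · rw [if_pos h, ih _ (by omega), if_neg (by omega)]
      simp only [Nat.dvd_sub_self_right, zero_add]
      congr 1; simp
      intro h1; rw [le_antisymm h1 h]
    · rw [if_neg h, add_zero]
      by_cases h0 : n = 0
      · simp [h0]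
      · rw [if_neg h0, if_neg]
        intro hd; exact h (Nat.le_of_dvd (by omega) hd)

def rb (y n : ℕ) : ℕ := n / (y - 1) + 1 - (n + y - 1) / y

lemma rho_le {y : ℕ} (hy : 1 < y) (n : ℕ) :
    coeff n (I (y - 1) * I y) ≤ ((n / (y - 1) + 1 : ℕ) : ℚ) - ((n + y - 1) / y : ℕ) := by
  induction n using Nat.strong_induction_on with
  | _ n ih =>
    rw [coeff_I_rec _ (by omega : 0 < y), coeff_Ik (by omega)]
    by_cases h : y ≤ n
    · have h1 := ih (n - y) (by omega)
      rw [if_pos h]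
      have h2 : (n + y - 1) / y = (n - y + y - 1) / y + 1 := by
        rw [Nat.div_eq, if_pos (by omega)]; congr 2; omega
      have h3 : n / (y-1) = (n - y)/(y-1) + 1 + if (y-1) ∣ n then 1 else 0 := by
        obtain ⟨k, rfl⟩ : ∃ k, n = k + 1 := ⟨n - 1, by omega⟩
        rw [Nat.succ_div, Nat.div_eq k, if_pos (by omega)]
        congr 3; omega
      rw [h2, h3]
      push_cast at h1 ⊢
      split_ifs <;> linarith
    · rw [if_neg h, add_zero]
      by_cases h0 : n = 0
      · subst h0
        rw [Nat.div_eq_of_lt (by omega : 0 + y - 1 < y)]; simp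
      · have h2 : (n + y - 1) / y = 1 := by
          rw [Nat.div_eq_iff (by omega)]; omega
        rw [h2]
        split_ifs with hd
        · have := Nat.div_pos (Nat.le_of_dvd (by omega) hd) (by omega : 0 < y - 1)
          have : (1:ℚ) ≤ ((n / (y-1) : ℕ) : ℚ) := by exact_mod_cast this
          push_cast; linarith
        · push_cast; linarith [(Nat.cast_nonneg (n/(y-1)) : (0:ℚ) ≤ _)]

lemma rho_le' {y : ℕ} (hy : 1 < y) (n : ℕ) :
    coeff n (I (y - 1) * I y) ≤ (rb y n : ℚ) := by
  have h := rho_le hy n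
  have h0 : 0 ≤ coeff n (I (y - 1) * I y) := ((Nn.I (by omega)).mul (Nn.I (by omega))) n
  rw [rb, Nat.cast_sub]
  · exact h
  · have : (((n + y - 1) / y : ℕ) : ℚ) ≤ (n / (y - 1) + 1 : ℕ) := by linarith
    exact_mod_cast this

def Wb (y m : ℕ) : ℕ := (m / (y-1) + 1) + (if y ≤ m then (m - y) / (y-1) + 1 else 0)
  + (if 2 * y ≤ m then (m - 2 * y) / (y-1) + 1 else 0)
  + (if 3 * y ≤ m then rb y (m - 3 * y) else 0) + (if 3 * y + 1 ≤ m then rb y (m - (3 * y + 1)) else 0)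

lemma W_le {y : ℕ} (hy : 1 < y) (m : ℕ) :
    coeff m (HH y * (1 - X ^ (3 * y + 2))) ≤ (Wb y m : ℚ) := by
  have e : HH y * (1 - X ^ (3 * y + 2)) = I 1 * I (y-1) + X ^ y * (I 1 * I (y-1)) + X ^ (2 * y) * (I 1 * I (y-1))
     + X ^ (3 * y) * (I (y-1) * I y) + X ^ (3 * y + 1) * (I (y-1) * I y) := by
    have h1 := I_mul one_pos
    have h3 := I_mul (k := y) (by omega)
    rw [HH]
    have p2 : (X : PowerSeries ℚ) ^ (2 * y) = (X ^ y) ^ 2 := by rw [← pow_mul, mul_comm]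
    have p3 : (X : PowerSeries ℚ) ^ (3 * y) = (X ^ y) ^ 3 := by rw [← pow_mul, mul_comm]
    rw [pow_add, pow_add, p2, p3]
    generalize (X : PowerSeries ℚ) ^ y = v at *
    linear_combination (I 1 * I (y-1) * (1 + v + v ^ 2)) * h3 + (v^3 * (1 + X) * I (y-1) * I y) * h1
  rw [e, Wb]
  simp only [map_add, coeff_X_pow_mul', coeff_I1I (show 0 < y - 1 by omega)]
  push_cast
  have hr := rho_le' hy
  gcongr
  · split_ifs <;> simp [hr]
  · split_ifs <;> simp [hr]

lemma HH_rec {y : ℕ} (hy : 1 < y) (n : ℕ) : coeff n (HH y) = ((n / (y-1) + 1 : ℕ) : ℚ)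
    + if y ≤ n then coeff (n - y) (HH y) else 0 := by
  rw [HH, coeff_I_rec _ (by omega), coeff_I1I (by omega)]

lemma b_eq {y : ℕ} (hy : 1 < y) (P p : PowerSeries ℚ) :
    ff y 0 - P * HH y - p * I 1 * I (3*y+2) =
    (I 1 * I (y+2) + X ^ (2*y) * (I 1 * I (2*y)) - P * (HH y * (1 - X ^ (3*y+2))) - p * I 1) * I (3*y+2) := by
  have h1 := I_mul (k := y+2) (by omega)
  have h3 := I_mul (k := 2*y) (by omega)
  have h4 := I_mul (k := 3*y+2) (by omega)
  have : ff y 0 = (I 1 * I (y+2) + X ^ (2*y) * (I 1 * I (2*y))) * I (3*y+2) := by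
    rw [ff]
    simp only [zero_mul, add_zero]
    have p2 : (X : PowerSeries ℚ) ^ (3 * y+2) = X ^ (2*y) * X ^ (y+2) := by rw [← pow_add]; congr 1; omega
    rw [p2] at h4
    generalize (X : PowerSeries ℚ) ^ (2*y) = a at *
    generalize (X : PowerSeries ℚ) ^ (y+2) = b at *
    linear_combination (-(I 1 * I (y+2) * I (2*y))) * h4 + (I 1 * I (3*y+2) * a * I (2*y)) * h1 + (I 1 * I (3*y+2) * I (y+2)) * h3
  rw [this]
  linear_combination (P * HH y) * h4

/-- the reduction of (b) for A = I (3y+2) -/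
lemma b_red {y : ℕ} (hy : 1 < y) (P p : PowerSeries ℚ)
    (h : Nn (I 1 * I (y+2) + X ^ (2*y) * (I 1 * I (2*y)) - P * (HH y * (1 - X ^ (3*y+2))) - p * I 1)) :
    Nn (ff y 0 - P * HH y - p * I 1 * I (3*y+2)) := by
  rw [b_eq hy]
  exact h.mul (Nn.I (by omega))

end BG
namespace BG

lemma rb_add {y : ℕ} (hy : 1 < y) (n : ℕ) : rb y n + (n + y - 1) / y = n / (y-1) + 1 := by
  have : (n + y - 1) / y ≤ n / (y-1) + 1 := by
    have h1 : (n + y - 1) / y ≤ (n + (y - 1)) / (y-1) := by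
      rw [← Nat.add_sub_assoc (by omega)]
      exact Nat.div_le_div_left (by omega) (by omega)
    rwa [Nat.add_div_right _ (by omega)] at h1
  rw [rb]; omega

lemma W_real {y m : ℕ} (hy : 1 < y) (hm : 3 * y + 1 ≤ m)
    (h : (0:ℚ) ≤ 2*(y-1)*(y+2)*(2*m-6*y-1) + 6*y*(y-1)*(m-y-1) + 3*(y-1)*(y+2)*(m-y+3)
      - 2*y*(y+2)*(5*m-9*y-1 +4*(y-1))) :
    Wb y m ≤ 1 + 3 * (m / (y+2)) + 3 * ((m + y + 2) / (2 * y)) := by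
  rw [Wb, if_pos (by omega), if_pos (by omega), if_pos (by omega), if_pos (by omega)]
  have r3 := rb_add hy (m - 3*y)
  have r4 := rb_add hy (m - (3*y+1))
  have h0 := Nat.div_mul_le_self m (y-1)
  have h1 := Nat.div_mul_le_self (m-y) (y-1)
  have h2 := Nat.div_mul_le_self (m-2*y) (y-1)
  have h3 := Nat.div_mul_le_self (m-3*y) (y-1)
  have h4 := Nat.div_mul_le_self (m-(3*y+1)) (y-1)
  have e3 := Nat.lt_div_mul_add (a := m - 3*y+y-1) (show 0 < y by omega)
  have e4 := Nat.lt_div_mul_add (a := m - (3*y+1)+y-1) (show 0 < y by omega)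
  have hB := Nat.lt_div_mul_add (a := m) (show 0 < y+2 by omega)
  have hC := Nat.lt_div_mul_add (a := m+y+2) (show 0 < 2*y by omega)
  generalize m / (y-1) = a0 at *
  generalize (m-y) / (y-1) = a1 at *
  generalize (m-2*y) / (y-1) = a2 at *
  generalize (m-3*y) / (y-1) = a3 at *
  generalize (m-(3*y+1)) / (y-1) = a4 at *
  generalize (m - 3*y+y-1) / y = f3 at *
  generalize (m - (3*y+1)+y-1) / y = f4 at *
  generalize m / (y+2) = B at *
  generalize (m+y+2) / (2*y) = D at *
  suffices hs : (a0 + a1 + a2 + a3 + a4 + 4 : ℚ) ≤ f3 + f4 + 3 * B + 3 * D by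
    have : a0 + a1 + a2 + a3 + a4 + 4 ≤ f3 + f4 + 3 * B + 3 * D := by exact_mod_cast hs
    omega
  have hA : (a0+a1+a2+a3+a4) * (y-1) + 9*y+1 ≤ 5*m := by
    simp only [add_mul]; omega
  have hF : 2*m ≤ (f3+f4)*y + 6*y+1 := by
    simp only [add_mul]; omega
  have hB' : m + 1 ≤ B * (y+2) + (y+2) := hB
  have hD' : m+y+3 ≤ D * (2*y) + 2*y := hC
  have qA : ((a0+a1+a2+a3+a4:ℕ):ℚ) * (y-1) + 9*y+1 ≤ 5*m := by
    have := (Nat.cast_le (α := ℚ)).2 hA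
    push_cast [Nat.cast_sub hy.le] at this ⊢; linarith
  have qF : (2:ℚ)*m ≤ (f3+f4:ℕ)*y + 6*y+1 := by exact_mod_cast hF
  have qB : (m:ℚ)+1 ≤ B * (y+2) + (y+2) := by exact_mod_cast hB'
  have qD : (m:ℚ)+y+3 ≤ D * (2*y) + 2*y := by exact_mod_cast hD'
  have hyq : (1:ℚ) < y := by exact_mod_cast hy
  have hpos : (0:ℚ) < 2*y*(y-1)*(y+2) := by
    have : (0:ℚ) < y - 1 := by linarith
    positivity
  have k1 : (0:ℚ) ≤ 2*y*(y+2) := by positivity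
  have k2 : (0:ℚ) ≤ 2*(y-1)*(y+2) := by
    have : (0:ℚ) < y - 1 := by linarith
    positivity
  have k3 : (0:ℚ) ≤ 6*y*(y-1) := by
    have : (0:ℚ) < y - 1 := by linarith
    positivity
  have k4 : (0:ℚ) ≤ 3*(y-1)*(y+2) := by
    have : (0:ℚ) < y - 1 := by linarith
    positivity
  have q1 := mul_le_mul_of_nonneg_left qA k1
  have q2 := mul_le_mul_of_nonneg_left qF k2
  have q3 := mul_le_mul_of_nonneg_left qB k3
  have q4 := mul_le_mul_of_nonneg_left qD k4
  push_cast at q1 q2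
  rw [← sub_nonneg]
  refine nonneg_of_mul_nonneg_right ?_ hpos
  linarith

lemma W_11_big {y m : ℕ} (hy : 11 ≤ y) (hm : 8 * y ≤ m) :
    Wb y m ≤ 1 + 3 * (m / (y+2)) + 3 * ((m + y + 2) / (2 * y)) := by
  apply W_real (by omega) (by omega)
  obtain ⟨t, rfl⟩ := Nat.exists_eq_add_of_le hy
  obtain ⟨k, rfl⟩ := Nat.exists_eq_add_of_le hm
  push_cast
  ring_nf
  positivity

lemma W_9_big {m : ℕ} (hm : 108 ≤ m) :
    Wb 9 m ≤ 1 + 3 * (m / (9+2)) + 3 * ((m + 9 + 2) / (2 * 9)) := by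
  apply W_real (by omega) (by omega)
  obtain ⟨k, rfl⟩ := Nat.exists_eq_add_of_le hm
  push_cast
  ring_nf
  positivity

lemma W_9 (m : ℕ) :
    Wb 9 m ≤ 1 + 3 * (m / (9+2)) + 3 * ((m + 9 + 2) / (2 * 9)) := by
  rcases le_or_gt 108 m with h | h
  · exact W_9_big h
  · revert m; decide +kernel

lemma W_7_aux : ∀ m < 160, Wb 7 m ≤ 1 + 3 * (m / (7+2)) + 3 * ((m + 7 + 2) / (2 * 7)) := by
  decide +kernel

lemma W_7_per (m : ℕ) (h : 23 ≤ m) : Wb 7 (m+126) = Wb 7 m + 69 := by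
  have r3 := rb_add (y := 7) (by omega) (m - 3*7)
  have r4 := rb_add (y := 7) (by omega) (m - (3*7+1))
  have r3' := rb_add (y := 7) (by omega) (m + 126 - 3*7)
  have r4' := rb_add (y := 7) (by omega) (m + 126- (3*7+1))
  rw [Wb, Wb, if_pos (by omega), if_pos (by omega), if_pos (by omega), if_pos (by omega), if_pos (by omega), if_pos (by omega), if_pos (by omega), if_pos (by omega)]
  have g : ∀ k, (k + 126) / 6 = k / 6 + 21 := by intro k; omega
  have g' : ∀ k, (k + 126) / 7 = k / 7 + 18 := by intro k; omega
  have a1 := g m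
  have a2 := g (m-7)
  have a3 := g (m-2*7)
  have a4 := g (m-3*7)
  have a5 := g (m-(3*7+1))
  have a6 := g' (m-3*7+7-1)
  have a7 := g' (m-(3*7+1)+7-1)
  rw [show m-7+126 = m+126-7 by omega] at a2
  rw [show m-2*7+126 = m+126-2*7 by omega] at a3
  rw [show m-3*7+126 = m+126-3*7 by omega] at a4
  rw [show m-(3*7+1)+126 = m+126-(3*7+1) by omega] at a5
  rw [show m-3*7+7-1+126 = m+126-3*7+7-1 by omega] at a6
  rw [show m-(3*7+1)+7-1+126 = m+126-(3*7+1)+7-1 by omega] at a7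
  simp only [show 7 - 1 = 6 from rfl] at *
  rw [a4, a6] at r3'
  rw [a5, a7] at r4'
  rw [a1, a2, a3]
  generalize rb 7 _ = R1 at *
  generalize rb 7 _ = R2 at *
  generalize rb 7 _ = R3 at *
  generalize rb 7 _ = R4 at *
  clear a1 a2 a3 a4 a5 a6 a7 g g'
  generalize (m-3*7+7-1)/7 = z1 at *
  generalize (m-(3*7+1)+7-1)/7 = z2 at *
  generalize (m-3*7)/6 = z3 at *
  generalize (m-(3*7+1))/6 = z4 at *
  generalize (m-7)/6 = z5 at *
  generalize (m-2*7)/6 = z6 at *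
  omega

lemma W_7 (m : ℕ) :
    Wb 7 m ≤ 1 + 3 * (m / (7+2)) + 3 * ((m + 7 + 2) / (2 * 7)) := by
  induction m using Nat.strong_induction_on with
  | _ m ih =>
    rcases lt_or_ge m 160 with h | h
    · exact W_7_aux m h
    · obtain ⟨k, rfl⟩ : ∃ k, m = k + 126 := ⟨m - 126, by omega⟩
      have := ih k (by omega)
      rw [W_7_per k (by omega)]
      have g : (k + 126) / (7+2) = k / (7+2) + 14 := by omega
      have g' : (k + 126 + 7 + 2) / (2*7) = (k+7+2) / (2*7) + 9 := by omega
      omega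

lemma W_small_aux {y m a : ℕ} (hy : 11 ≤ y) (ha : a * (y-1) ≤ m) (ha' : m < a * (y-1) + (y-1))
    (h1 : 1 ≤ a) (h8 : a ≤ 8) :
    Wb y m ≤ 3 * a + 2 ∧ (m < a * (y-1) + 3 → Wb y m ≤ 3 * a) ∧ (a < 3 → Wb y m ≤ 3 * a) := by
  have hd : 0 < y - 1 := by omega
  have hy0 : 0 < y := by omega
  have hay : a * y = a * (y-1) + a := by
    obtain ⟨k, rfl⟩ : ∃ k, y = k + 1 := ⟨y-1, by omega⟩
    simp; ring
  have f0 : m / (y-1) < a + 1 := (Nat.div_lt_iff_lt_mul hd).2 (by rw [add_mul]; omega)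
  have f1 : y ≤ m → (m-y) / (y-1) < a := fun h => (Nat.div_lt_iff_lt_mul hd).2 (by omega)
  have f2 : 2*y ≤ m → (m-2*y) / (y-1) + 1 < a := fun h => by
    rw [← Nat.add_div_right _ hd]; exact (Nat.div_lt_iff_lt_mul hd).2 (by omega)
  have f3 : ∀ c, 3*y ≤ c → c ≤ m → (c-3*y) / (y-1) + 2 < a := fun c h h' => by
    rw [← Nat.add_mul_div_right _ _ hd]; exact (Nat.div_lt_iff_lt_mul hd).2 (by omega)
  have f4 : ∀ c, 3*y ≤ c → c ≤ m → m < a * (y-1) + 3 → (c-3*y) / (y-1) + 3 < a := fun c h h' h'' => by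
    rw [← Nat.add_mul_div_right _ _ hd]; exact (Nat.div_lt_iff_lt_mul hd).2 (by omega)
  have f5 : ∀ c, 3*y ≤ c → m ≤ c + 1 → a ≤ (c-3*y+y-1) / y + 3 := fun c h h' => by
    rw [← Nat.add_mul_div_right _ _ hy0]; exact (Nat.le_div_iff_mul_le hy0).2 (by omega)
  have g3 : 3*y ≤ m → rb y (m-3*y) ≤ 1 ∧ (m < a * (y-1) + 3 → rb y (m-3*y) ≤ 0) := fun h => by
    have := rb_add (y := y) (by omega) (m-3*y)
    have h1 := f3 m h le_rfl
    have h2 := f4 m h le_rfl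
    have h3 := f5 m h (by omega)
    constructor
    · omega
    · intro h4; have := h2 h4; omega
  have g4 : 3*y+1 ≤ m → rb y (m-(3*y+1)) ≤ 1 ∧ (m < a * (y-1) + 3 → rb y (m-(3*y+1)) ≤ 0) := fun h => by
    rw [show m-(3*y+1) = (m-1)-3*y by omega]
    have := rb_add (y := y) (by omega) (m-1-3*y)
    have h1 := f3 (m-1) (by omega) (by omega)
    have h2 := f4 (m-1) (by omega) (by omega)
    have h3 := f5 (m-1) (by omega) (by omega)
    constructor
    · omega
    · intro h4; have := h2 h4; omega
  have g5 : 3*y ≤ m → 2 < a := fun h => Nat.lt_of_le_of_lt (Nat.le_add_left _ _) (f3 m h le_rfl)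
  clear f3 f4 f5
  rw [Wb]
  refine ⟨?_, ?_, ?_⟩
  · split_ifs <;> omega
  · intro h; split_ifs <;> omega
  · intro h; split_ifs <;> omega

lemma W_11_small {y m : ℕ} (hy : 11 ≤ y) (hm : m < 8 * y) :
    Wb y m ≤ 1 + 3 * (m / (y+2)) + 3 * ((m + y + 2) / (2 * y)) := by
  have lo : ∀ n c k, 0 < c → k * c ≤ n → k ≤ n / c := fun n c k hc h => (Nat.le_div_iff_mul_le hc).2 h
  have hd : 0 < y - 1 := by omega
  have A := Nat.div_mul_le_self m (y-1)
  have A' := Nat.lt_div_mul_add (a := m) hd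
  have h8 : m / (y-1) < 9 := (Nat.div_lt_iff_lt_mul hd).2 (by omega)
  have aux := fun h => W_small_aux hy A A' h (by omega)
  rcases Nat.eq_zero_or_pos (m / (y-1)) with h0 | h0
  · rw [h0] at A'
    rw [Wb, h0, if_neg (by omega), if_neg (by omega), if_neg (by omega), if_neg (by omega)]
    omega
  have aux := aux h0
  generalize m / (y-1) = a at *
  have b := lo m (y+2)
  have c := lo (m+y+2) (2*y)
  generalize m / (y+2) = B at *
  generalize (m+y+2) / (2*y) = D at *
  generalize Wb y m = W at *
  clear lo
  interval_cases a
  · have := b 0 (by omega) (by omega); have := c 1 (by omega) (by omega)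
    have := aux.2.2 (by omega); omega
  · have := b 1 (by omega) (by omega); have := c 1 (by omega) (by omega)
    have := aux.2.2 (by omega); omega
  · have := b 2 (by omega) (by omega); have := c 1 (by omega) (by omega)
    rcases lt_or_ge m (3 * (y-1) + 3) with h | h
    · have := aux.2.1 h; omega
    · have := c 2 (by omega) (by omega); omega
  · have := b 3 (by omega) (by omega); have := c 2 (by omega) (by omega); omega
  · have := b 3 (by omega) (by omega); have := c 2 (by omega) (by omega)
    rcases lt_or_ge m (5 * (y-1) + 3) with h | h
    · have := aux.2.1 h; omega
    · have := c 3 (by omega) (by omega); omega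
  · have := b 4 (by omega) (by omega); have := c 3 (by omega) (by omega); omega
  · have := b 5 (by omega) (by omega); have := c 3 (by omega) (by omega); omega
  · have := b 6 (by omega) (by omega); have := c 4 (by omega) (by omega); omega

lemma W_all {y : ℕ} (hy : 7 ≤ y) (hyo : Odd y) (m : ℕ) :
    Wb y m ≤ 1 + 3 * (m / (y+2)) + 3 * ((m + y + 2) / (2 * y)) := by
  obtain ⟨k, hk⟩ := hyo
  rcases lt_or_ge y 11 with h | h
  · have : y = 7 ∨ y = 9 := by omega
    rcases this with rfl | rfl
    · exact W_7 m
    · exact W_9 m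
  · rcases lt_or_ge m (8*y) with h' | h'
    · exact W_11_small h h'
    · exact W_11_big h h'

lemma b_all {y : ℕ} (hy : 7 ≤ y) (hyo : Odd y) :
    Nn (ff y 0 - C (1/3) * X ^ (y+2) * HH y - (1 + C (2/3) * X ^ (y+2)) * I 1 * I (3*y+2)) := by
  apply b_red (by omega)
  intro n
  simp only [map_add, map_sub, add_mul, mul_assoc, one_mul, coeff_C_mul, coeff_X_pow_mul', coeff_I1I (show 0 < y + 2 by omega),
    coeff_I1I (show 0 < 2 * y by omega), coeff_I1]
  by_cases h : y + 2 ≤ n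
  · rw [if_pos h, if_pos h]
    have hW := W_le (y := y) (by omega) (n - (y+2))
    have hW2 := (Nat.cast_le (α := ℚ)).2 (W_all hy hyo (n - (y+2)))
    have e1 : n / (y+2) = (n - (y+2)) / (y+2) + 1 := by rw [Nat.div_eq, if_pos (by omega)]
    have e2 : (if 2*y ≤ n then (((n - 2*y) / (2*y) + 1 : ℕ) : ℚ) else 0) = ((n - (y+2) + y + 2) / (2*y) : ℕ) := by
      rw [show n - (y+2) + y + 2 = n by omega]
      split_ifs with h'
      · rw [Nat.div_eq n, if_pos (by omega)]
      · rw [Nat.div_eq_of_lt (by omega)]; simp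
    rw [e1, e2]
    push_cast at hW2 ⊢
    linarith
  · rw [if_neg h, if_neg h, if_neg (by omega)]
    push_cast
    have : (0:ℚ) ≤ ((n / (y+2) : ℕ) : ℚ) := Nat.cast_nonneg _
    simp [this]

end BG
namespace BG

lemma gg0 (y : ℕ) : gg y 0 = I 2 * I (2*y+1) * I y := by
  rw [gg]; simp only [zero_mul, add_zero]; ring

lemma kap_rec (y n : ℕ) : coeff n (I 2 * I (2*y+1)) = (if 2 ∣ n then 1 else 0)
    + if 2*y+1 ≤ n then coeff (n - (2*y+1)) (I 2 * I (2*y+1)) else 0 := by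
  rw [coeff_I_rec _ (by omega), coeff_Ik (by omega)]

lemma kap_le (y n : ℕ) : (2 ∣ n → coeff n (I 2 * I (2*y+1)) ≤ ((n / (4*y+2) + 1 : ℕ) : ℚ)) ∧
    (¬ 2 ∣ n → coeff n (I 2 * I (2*y+1)) ≤ (((n + (2*y+1)) / (4*y+2) : ℕ) : ℚ)) := by
  induction n using Nat.strong_induction_on with
  | _ n ih =>
    constructor
    · intro h
      rw [kap_rec, if_pos h]
      split_ifs with h'
      · have := (ih (n - (2*y+1)) (by omega)).2 (by omega)
        rw [show n - (2*y+1) + (2*y+1) = n by omega] at this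
        push_cast; linarith
      · push_cast; simp
    · intro h
      rw [kap_rec, if_neg h]
      split_ifs with h'
      · have := (ih (n - (2*y+1)) (by omega)).1 (by omega)
        rw [← Nat.add_div_right _ (by omega), show n - (2*y+1) + (4*y+2) = n + (2*y+1) by omega] at this
        linarith
      · simp

lemma U_t (s : ℕ) : ((s+3)^2+4)/8 = (s+2)^2/8 + (s+1)/4+1 := by
  obtain ⟨t, i, hi, rfl⟩ : ∃ t i, i < 4 ∧ s = 4*t+i := ⟨s/4, s%4, by omega, by omega⟩
  interval_cases i <;> ring_nf <;> omega
lemma U_f (s : ℕ) : (s+3)^2/8 = ((s+2)^2+4)/8 + (s+3)/4 := by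
  obtain ⟨t, i, hi, rfl⟩ : ∃ t i, i < 4 ∧ s = 4*t+i := ⟨s/4, s%4, by omega, by omega⟩
  interval_cases i <;> ring_nf <;> omega

lemma g_rec {y : ℕ} (hy : 1 < y) (n : ℕ) : coeff n (gg y 0) = coeff n (I 2 * I (2*y+1))
    + if y ≤ n then coeff (n - y) (gg y 0) else 0 := by
  rw [gg0, coeff_I_rec _ (by omega)]

lemma kap_le' {y s r : ℕ} (hy : 1 < y) (hr : r < y) :
   (2 ∣ y*s+r → coeff (y*s+r) (I 2 * I (2*y+1)) ≤ ((s/4 + 1 : ℕ) : ℚ)) ∧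
    (¬ 2 ∣ y*s+r → coeff (y*s+r) (I 2 * I (2*y+1)) ≤ (((s+2)/4 : ℕ) : ℚ)) := by
  have h := kap_le y (y*s+r)
  constructor
  · intro h2
    refine (h.1 h2).trans (Nat.cast_le.2 ?_)
    have : (y*s+r)/(4*y+2) ≤ (y*s+r)/(y*4) := Nat.div_le_div_left (by omega) (by omega)
    rw [← Nat.div_div_eq_div_mul, Nat.mul_add_div (by omega), Nat.div_eq_of_lt hr] at this
    omega
  · intro h2
    refine (h.2 h2).trans (Nat.cast_le.2 ?_)
    rw [Nat.le_div_iff_mul_le (by omega)]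
    have h3 := Nat.div_mul_le_self (y*s+r+(2*y+1)) (4*y+2)
    generalize (y*s+r+(2*y+1)) / (4*y+2) = k at *
    by_contra hc
    rcases Nat.eq_zero_or_pos k with hk | hk
    · omega
    have : y * (s + 3) ≤ y * (k * 4) := Nat.mul_le_mul_left _ (by omega)
    nlinarith

lemma g_le {y : ℕ} (hy : 1 < y) (hyo : Odd y) (s : ℕ) : ∀ r < y,
   (2 ∣ y*s+r → coeff (y*s+r) (gg y 0) ≤ ((((s+2)^2+4)/8 : ℕ) : ℚ)) ∧
    (¬ 2 ∣ y*s+r → coeff (y*s+r) (gg y 0) ≤ (((s+2)^2/8 : ℕ) : ℚ)) := by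
  obtain ⟨t, ht⟩ := hyo
  induction s with
  | zero =>
    intro r hr
    have := kap_le' (s := 0) hy hr
    rw [g_rec hy, if_neg (by omega), add_zero]
    exact this
  | succ s ih =>
    intro r hr
    have hk := kap_le' (s := s+1) hy hr
    have ih := ih r hr
    rw [g_rec hy, if_pos (by rw [mul_add]; omega)]
    have e : y * (s+1) + r - y = y * s + r := by rw [mul_add]; omega
    have e' : y * (s+1) + r = y * s + r + y := by ring
    rw [e]
    constructor
    · intro h
      have h1 := hk.1 h
      have h2 := ih.2 (by omega)
      have := U_t s
      rw [show s + 1 + 2 = s + 3 by ring, this]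
      push_cast at *
      linarith
    · intro h
      have h1 := hk.2 h
      have h2 := ih.1 (by omega)
      have := U_f s
      rw [show s + 1 + 2 = s + 3 by ring, this]
      push_cast at *
      linarith

lemma H_lo {y : ℕ} (hy : 1 < y) (r t : ℕ) : ((t:ℚ)+1)*(t+2)/2 ≤ coeff (y*t+r) (HH y) := by
  have hq : ∀ t, t ≤ (y*t+r)/(y-1) := fun t => by
    rw [Nat.le_div_iff_mul_le (by omega)]
    calc t * (y-1) ≤ t * y := Nat.mul_le_mul_left _ (by omega)
      _ ≤ y * t + r := by rw [mul_comm]; omega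
  induction t with
  | zero =>
    rw [HH_rec hy]
    have : (0:ℚ) ≤ if y ≤ y*0+r then coeff (y*0+r-y) (HH y) else 0 := by
      split_ifs
      · exact Nn.HH hy _
      · exact le_rfl
    have := hq 0
    have : (0:ℚ) ≤ (((y*0+r)/(y-1) : ℕ) : ℚ) := Nat.cast_nonneg _
    push_cast at *; linarith
  | succ t ih =>
    rw [HH_rec hy, if_pos (by rw [mul_add]; omega), show y * (t+1) + r - y = y * t + r by rw [mul_add]; omega]
    have := hq (t+1)
    have : ((t+1:ℕ):ℚ) ≤ (((y*(t+1)+r)/(y-1) : ℕ) : ℚ) := Nat.cast_le.2 this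
    push_cast at *; linarith

lemma H_lo1 {y : ℕ} (hy : 1 < y) (t : ℕ) : ((t:ℚ)+1)*(t+4)/2 ≤ coeff (y*t+(y-1)) (HH y) := by
  have hq : ∀ t, t + 1 ≤ (y*t+(y-1))/(y-1) := fun t => by
    rw [Nat.le_div_iff_mul_le (by omega)]
    calc (t+1) * (y-1) = t * (y-1) + (y-1) := by ring
      _ ≤ t * y + (y-1) := Nat.add_le_add_right (Nat.mul_le_mul_left _ (by omega)) _
      _ = _ := by ring
  induction t with
  | zero =>
    rw [HH_rec hy, if_neg (by omega)]
    have := hq 0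
    have : ((0+1:ℕ):ℚ) ≤ (((y*0+(y-1))/(y-1) : ℕ) : ℚ) := Nat.cast_le.2 this
    push_cast at *; linarith
  | succ t ih =>
    rw [HH_rec hy, if_pos (by rw [mul_add]; omega), show y * (t+1) + (y-1) - y = y * t + (y-1) by rw [mul_add]; omega]
    have := hq (t+1)
    have : ((t+1+1:ℕ):ℚ) ≤ (((y*(t+1)+(y-1))/(y-1) : ℕ) : ℚ) := Nat.cast_le.2 this
    push_cast at *; linarith

lemma H_lo0 {y : ℕ} (hy : 1 < y) (t : ℕ) : ((t:ℚ)+1)*(t+4)/2 - 1 ≤ coeff (y*t+(y-2)) (HH y) := by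
  have hq : ∀ t, t + 2 ≤ (y*(t+1)+(y-2))/(y-1) := fun t => by
    rw [Nat.le_div_iff_mul_le (by omega)]
    obtain ⟨k, rfl⟩ : ∃ k, y = k + 2 := ⟨y-2, by omega⟩
    simp only [Nat.add_sub_cancel, show k + 2 - 1 = k+1 by omega]
    nlinarith
  induction t with
  | zero =>
    rw [HH_rec hy, if_neg (by omega)]
    have : (0:ℚ) ≤ (((y*0+(y-2))/(y-1) : ℕ) : ℚ) := Nat.cast_nonneg _
    push_cast at *; linarith
  | succ t ih =>
    rw [HH_rec hy, if_pos (by rw [mul_add]; omega), show y * (t+1) + (y-2) - y = y * t + (y-2) by rw [mul_add]; omega]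
    have := hq t
    have : ((t+2:ℕ):ℚ) ≤ (((y*(t+1)+(y-2))/(y-1) : ℕ) : ℚ) := Nat.cast_le.2 this
    push_cast at *; linarith

lemma U_le (s : ℕ) : 3 * (((s+2)^2+4)/8) ≤ 5 + s*(s+1)/2 := by
  have h : 3 * (((s+2)^2+4)) ≤ 40 + 4*(s*(s+1)) := by
    zify; nlinarith [sq_nonneg ((s:ℤ)-4)]
  have h2 : s*(s+1)/2*2 = s*(s+1) := Nat.div_mul_cancel (Nat.even_mul_succ_self s).two_dvd
  omega

lemma U_le2 (s : ℕ) (h2 : 2 ≤ s) (h4 : s ≠ 4) : 3 * (((s+2)^2+4)/8) ≤ 3 + s*(s+1)/2 := by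
  rcases lt_or_ge s 8 with h8 | h8
  · interval_cases s <;> omega
  have h : 3 * (((s+2)^2+4)) + 16 ≤ 40 + 4*(s*(s+1)) := by
    zify; zify at h8; nlinarith
  have h2 : s*(s+1)/2*2 = s*(s+1) := Nat.div_mul_cancel (Nat.even_mul_succ_self s).two_dvd
  omega

lemma Uof (s : ℕ) : (s+2)^2/8 ≤ ((s+2)^2+4)/8 := Nat.div_le_div_right (by omega)

lemma halfcast (s : ℕ) : ((s*(s+1)/2 : ℕ) : ℚ) = s*(s+1)/2 := by
  rw [Nat.cast_div (Nat.even_mul_succ_self s).two_dvd (by norm_num)]; push_cast; ring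

lemma a_key {y : ℕ} (hy : 7 ≤ y) (hyo : Odd y) (n : ℕ) :
    (n < y + 2 → coeff n (gg y 0) ≤ 1) ∧
    (y + 2 ≤ n → 3 * coeff n (gg y 0) ≤ coeff (n - (y+2)) (HH y) + 5) := by
  have hy1 : 1 < y := by omega
  obtain ⟨s, r, hr, rfl⟩ : ∃ s r, r < y ∧ n = y*s+r :=
    ⟨n / y, n % y, Nat.mod_lt _ (by omega), (Nat.div_add_mod n y).symm⟩
  have hg := g_le hy1 hyo s r hr
  have hg' : coeff (y*s+r) (gg y 0) ≤ ((((s+2)^2+4)/8 : ℕ) : ℚ) := by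
    by_cases h : 2 ∣ y*s+r
    · exact hg.1 h
    · exact (hg.2 h).trans (Nat.cast_le.2 (Uof s))
  constructor
  · intro h
    have : s < 2 := by
      by_contra hc
      have : y * 2 ≤ y * s := Nat.mul_le_mul_left _ (by omega)
      omega
    interval_cases s
    · simpa using hg'
    · simpa using hg'
  · intro h
    have hs : 1 ≤ s := by
      rcases Nat.eq_zero_or_pos s with h0 | h0
      · subst h0; omega
      · exact h0
    rcases le_or_gt 2 r with h2 | h2
    · obtain ⟨t, rfl⟩ : ∃ t, s = t + 1 := ⟨s - 1, by omega⟩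
      have hH := H_lo hy1 (r-2) t
      rw [show y * (t+1) + r - (y+2) = y*t + (r-2) by rw [mul_add]; omega]
      have hu := (Nat.cast_le (α := ℚ)).2 (U_le (t+1))
      rw [Nat.cast_add, halfcast] at hu
      push_cast at *
      linarith
    have hs2 : 2 ≤ s := by
      by_contra hc
      obtain rfl : s = 1 := by omega
      omega
    obtain ⟨t, rfl⟩ : ∃ t, s = t + 2 := ⟨s - 2, by omega⟩
    have hH : ((t:ℚ)+1)*(t+4)/2 - 1 ≤ coeff (y * (t+2) + r - (y+2)) (HH y) := by
      have : r = 0 ∨ r = 1 := by omega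
      rcases this with rfl | rfl
      · rw [show y * (t+2) + 0 - (y+2) = y*t + (y-2) by rw [mul_add]; omega]
        exact H_lo0 hy1 t
      · rw [show y * (t+2) + 1 - (y+2) = y*t + (y-1) by rw [mul_add]; omega]
        linarith [H_lo1 hy1 t]
    by_cases h4 : t + 2 = 4
    · obtain rfl : t = 2 := by omega
      have hH2 : (8:ℚ) ≤ coeff (y * (2+2) + r - (y+2)) (HH y) := by
        refine le_trans ?_ hH; norm_num
      have : r = 0 ∨ r = 1 := by omega
      rcases this with rfl | rfl
      · have g3 := (g_le hy1 hyo 3 0 (by omega)).2 (by obtain ⟨k, rfl⟩ := hyo; omega)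
        have hk : coeff (y*(2+2)+0) (I 2 * I (2*y+1)) = 1 := by
          rw [kap_rec, if_pos (by omega), if_pos (by omega), kap_rec, if_neg (by omega), if_neg (by omega)]
          simp
        rw [g_rec hy1, hk, if_pos (by omega), show y * (2+2) + 0 - y = y * 3 + 0 by omega]
        norm_num at g3
        have g3' : coeff (y * 3 + 0) (gg y 0) ≤ 3 := by simpa using g3
        linarith
      · have g4 := hg.2 (by omega)
        norm_num at g4
        have g4' : coeff (y * (2+2) + 1) (gg y 0) ≤ 4 := by simpa using g4
        linarith
    · have hu := (Nat.cast_le (α := ℚ)).2 (U_le2 (t+2) hs2 h4)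
      rw [Nat.cast_add, halfcast] at hu
      push_cast at *
      linarith

lemma a_all {y : ℕ} (hy : 7 ≤ y) (hyo : Odd y) :
    Nn (C (1/3) * X ^ (y+2) * HH y + (1 + C (2/3) * X ^ (y+2)) * I 1 - gg y 0) := by
  intro n
  simp only [map_add, map_sub, add_mul, mul_assoc, one_mul, coeff_C_mul, coeff_X_pow_mul', coeff_I1]
  have h := a_key hy hyo n
  by_cases h' : y + 2 ≤ n
  · rw [if_pos h', if_pos h']; linarith [h.2 h']
  · rw [if_neg h', if_neg h']; linarith [h.1 (by omega)]

lemma Nn.P1 {c : ℚ} (hc : 0 ≤ c) (k : ℕ) : Nn (PowerSeries.C c * PowerSeries.X ^ k) := (Nn.C hc).mul (Nn.X k)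

lemma fin_7 {y : ℕ} (hy : 7 ≤ y) (hyo : Odd y) (m : ℕ) : Nn (ff y 0 * Ph y 1 m - gg y 0 * Ga y 1 m) := by
  refine finish (by omega) m _ _ (I (3*y+2)) (Nn.P1 (by norm_num) _) (Nn.one.add (Nn.P1 (by norm_num) _)) ?_
    (a_all hy hyo) (b_all hy hyo)
  have := prop_II (y := y) (by omega) 1 m
  rwa [show y + 1 * (2*y+2) = 3*y+2 by ring] at this

end BG
namespace BG

def it (F : ℕ → ℕ) (k : ℕ) : ℕ → ℕ → ℕ
  | 0, n => F n
  | f+1, n => F n + if k ≤ n then it F k f (n - k) else 0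

lemma it_coeff (A : PowerSeries ℚ) (F : ℕ → ℕ) (h : ∀ n, coeff n A = (F n : ℚ)) {k : ℕ} (hk : 0 < k) :
    ∀ f n, n ≤ f → coeff n (A * I k) = (it F k f n : ℚ) := by
  intro f
  induction f with
  | zero =>
    intro n hn
    rw [coeff_I_rec _ hk, if_neg (by omega), h, it, add_zero]
  | succ f ih =>
    intro n hn
    rw [coeff_I_rec _ hk, it, h]
    split_ifs with h'
    · rw [ih _ (by omega)]; push_cast; ring
    · simp

lemma it_coeff' (A : PowerSeries ℚ) (F : ℕ → ℕ) (h : ∀ n, coeff n A = (F n : ℚ)) {k : ℕ} (hk : 0 < k) (n : ℕ) :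
    coeff n (A * I k) = (it F k n n : ℚ) := it_coeff A F h hk n n le_rfl

lemma coeff_I2 (n : ℕ) : coeff n (I 2) = ((1 - n % 2 : ℕ) : ℚ) := by
  rw [coeff_Ik (by omega)]
  split_ifs with h
  · rw [Nat.mod_eq_zero_of_dvd h]; simp
  · rw [show n % 2 = 1 by omega]; simp

def Hc (y n : ℕ) : ℕ := it (fun n => n / (y-1) + 1) y n n
def kc (y n : ℕ) : ℕ := it (fun n => 1 - n % 2) (2*y+1) n n
def gc (y n : ℕ) : ℕ := it (kc y) y n n

lemma Hc_eq {y : ℕ} (hy : 1 < y) (n : ℕ) : coeff n (HH y) = (Hc y n : ℚ) :=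
  it_coeff' _ _ (coeff_I1I (by omega)) (by omega) n
lemma kc_eq (y : ℕ) (n : ℕ) : coeff n (I 2 * I (2*y+1)) = (kc y n : ℚ) :=
  it_coeff' _ _ coeff_I2 (by omega) n
lemma gc_eq {y : ℕ} (hy : 1 < y) (n : ℕ) : coeff n (gg y 0) = (gc y n : ℚ) := by
  rw [gg0]; exact it_coeff' _ _ (kc_eq y) (by omega) n

lemma Hc_rec {y : ℕ} (hy : 1 < y) (n : ℕ) (h : y ≤ n) : Hc y n = n / (y-1) + 1 + Hc y (n-y) := by
  have := HH_rec hy n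
  rw [if_pos h, Hc_eq hy, Hc_eq hy] at this
  exact_mod_cast this
lemma gc_rec {y : ℕ} (hy : 1 < y) (n : ℕ) (h : y ≤ n) : gc y n = kc y n + gc y (n-y) := by
  have := g_rec hy n
  rw [if_pos h, gc_eq hy, gc_eq hy, kc_eq] at this
  exact_mod_cast this
lemma kc_le (y n : ℕ) : kc y n ≤ n / (4*y+2) + 1 := by
  have h := kap_le y n
  rw [kc_eq] at h
  by_cases h2 : 2 ∣ n
  · exact_mod_cast h.1 h2
  · have h3 := h.2 h2
    have h3 : kc y n ≤ (n + (2*y+1)) / (4*y+2) := by exact_mod_cast h3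
    refine h3.trans ?_
    rw [← Nat.add_div_right _ (by omega)]
    exact Nat.div_le_div_right (by omega)

lemma a5_fin : ∀ n < 100, 4 * gc 5 n ≤ (if 7 ≤ n then Hc 5 (n-7) else 0) + 4 + (if 7 ≤ n then 3 else 0)
    + (if 10 ≤ n then 2 else 0) + (if 20 ≤ n then 1 else 0) := by
  decide +kernel

lemma a5_big (n : ℕ) (hn : 20 ≤ n) : 4 * gc 5 n ≤ Hc 5 (n-7) + 10 := by
  induction n using Nat.strong_induction_on with
  | _ n ih =>
    rcases lt_or_ge n 100 with h | h
    · have := a5_fin n h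
      simp only [hn, show 7 ≤ n by omega, show 10 ≤ n by omega, if_true] at this
      omega
    · have := ih (n-5) (by omega) (by omega)
      rw [gc_rec (by omega) n (by omega), Hc_rec (by omega) (n-7) (by omega)]
      have hk := kc_le 5 n
      rw [show n - 5 - 7 = n - 7 - 5 by omega] at this
      omega

noncomputable def p5 : PowerSeries ℚ := 1 + C (3/4) * X ^ 7 + C (1/2) * X ^ 10 + C (1/4) * X ^ 20

lemma a5 : Nn (C (1/4) * X ^ 7 * HH 5 + p5 * I 1 - gg 5 0) := by
  intro n
  simp only [p5, map_add, map_sub, add_mul, mul_assoc, one_mul, coeff_C_mul, coeff_X_pow_mul', coeff_I1,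
    Hc_eq (show 1 < 5 by omega), gc_eq (show 1 < 5 by omega)]
  rcases lt_or_ge n 20 with h | h
  · have := (Nat.cast_le (α := ℚ)).2 (a5_fin n (by omega))
    push_cast at this
    split_ifs at this ⊢ <;> first | omega | linarith
  · have := (Nat.cast_le (α := ℚ)).2 (a5_big n h)
    push_cast at this
    rw [if_pos (by omega), if_pos (by omega), if_pos (by omega), if_pos (by omega)]
    linarith

lemma b5_fin : ∀ n < 150, (if 7 ≤ n then Wb 5 (n-7) else 0) + 4 + (if 7 ≤ n then 3 else 0)
    + (if 10 ≤ n then 2 else 0) + (if 20 ≤ n then 1 else 0) + (if n = 10 then 1 else 0) ≤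
    4 * (n/7+1) + 4 * (if 10 ≤ n then (n-10)/10+1 else 0) + (if n = 27 then 1 else 0) := by
  decide +kernel

lemma b5_big (n : ℕ) (h : 150 ≤ n) : Wb 5 (n-7) + 10 ≤ 4 * (n/7+1) + 4 * ((n-10)/10+1) := by
  rw [Wb, if_pos (by omega), if_pos (by omega), if_pos (by omega), if_pos (by omega)]
  have r3 := rb_add (y := 5) (by omega) (n - 7 - 3*5)
  have r4 := rb_add (y := 5) (by omega) (n - 7 - (3*5+1))
  omega

lemma b5 : Nn (ff 5 0 - C (1/4) * X ^ 7 * HH 5 - p5 * I 1 * I 17) := by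
  have e := b_eq (y := 5) (by omega) (C (1/4) * X ^ 7) p5
  norm_num only at e
  rw [e]
  have h17 := I_mul (k := 17) (by omega)
  have : ∀ T : PowerSeries ℚ, Nn (T - C (1/4) * X ^ 10 + C (1/4) * X ^ 27) → Nn (T * I 17) := by
    intro T hT
    have := (hT.mul (Nn.I (k := 17) (by omega))).add ((Nn.C (show (0:ℚ) ≤ 1/4 by norm_num)).mul (Nn.X 10))
    convert this using 1
    linear_combination (C (1/4) * X ^ 10) * h17
  apply this
  intro n
  have hW := W_le (y := 5) (by omega) (n-7)
  norm_num only at hW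
  simp only [p5, map_add, map_sub, add_mul, mul_assoc, one_mul, coeff_C_mul, coeff_X_pow_mul', coeff_I1,
    coeff_X_pow, coeff_I1I (show 0 < 7 by omega), coeff_I1I (show 0 < 10 by omega)]
  rcases lt_or_ge n 150 with h | h
  · have := (Nat.cast_le (α := ℚ)).2 (b5_fin n (by omega))
    push_cast at this ⊢
    split_ifs at this ⊢ <;> first | omega | linarith
  · have := (Nat.cast_le (α := ℚ)).2 (b5_big n h)
    push_cast at this ⊢
    rw [if_pos (by omega), if_pos (by omega), if_pos (by omega), if_pos (by omega), if_pos (by omega), if_neg (by omega), if_neg (by omega)]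
    linarith

lemma fin_5 (m : ℕ) : Nn (ff 5 0 * Ph 5 1 m - gg 5 0 * Ga 5 1 m) := by
  refine finish (by omega) m _ _ (I 17) (Nn.P1 (by norm_num) _) ?_ ?_ a5 b5
  · exact ((Nn.one.add (Nn.P1 (by norm_num) _)).add (Nn.P1 (by norm_num) _)).add (Nn.P1 (by norm_num) _)
  · exact prop_II (y := 5) (by omega) 1 m

end BG
namespace BG

lemma a3_fin : ∀ n < 80, 5 * gc 3 n ≤ (if 5 ≤ n then Hc 3 (n-5) else 0) + 5 + (if 5 ≤ n then 4 else 0)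
    + (if 6 ≤ n then 2 else 0) + (if 10 ≤ n then 2 else 0) + (if 12 ≤ n then 2 else 0) := by
  decide +kernel

lemma a3_big (n : ℕ) (hn : 12 ≤ n) : 5 * gc 3 n ≤ Hc 3 (n-5) + 15 := by
  induction n using Nat.strong_induction_on with
  | _ n ih =>
    rcases lt_or_ge n 80 with h | h
    · have := a3_fin n h
      simp only [hn, show 5 ≤ n by omega, show 6 ≤ n by omega, show 10 ≤ n by omega, if_true] at this
      omega
    · have := ih (n-3) (by omega) (by omega)
      rw [gc_rec (by omega) n (by omega), Hc_rec (by omega) (n-5) (by omega)]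
      have hk := kc_le 3 n
      rw [show n - 3 - 5 = n - 5 - 3 by omega] at this
      omega

noncomputable def p3 : PowerSeries ℚ := 1 + C (4/5) * X ^ 5 + C (2/5) * X ^ 6 + C (2/5) * X ^ 10 + C (2/5) * X ^ 12

lemma a3 : Nn (C (1/5) * X ^ 5 * HH 3 + p3 * I 1 - gg 3 0) := by
  intro n
  simp only [p3, map_add, map_sub, add_mul, mul_assoc, one_mul, coeff_C_mul, coeff_X_pow_mul', coeff_I1,
    Hc_eq (show 1 < 3 by omega), gc_eq (show 1 < 3 by omega)]
  rcases lt_or_ge n 12 with h | h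
  · have := (Nat.cast_le (α := ℚ)).2 (a3_fin n (by omega))
    push_cast at this
    split_ifs at this ⊢ <;> first | omega | linarith
  · have := (Nat.cast_le (α := ℚ)).2 (a3_big n h)
    push_cast at this
    rw [if_pos (by omega), if_pos (by omega), if_pos (by omega), if_pos (by omega), if_pos (by omega)]
    linarith

noncomputable def A3 : PowerSeries ℚ := (1 - X ^ 13) * I 11 * I 19

lemma Dm_aux3 : Dm 1 ((1 - X ^ 13) * I 11) := by
  rw [Dm]
  have h1 := I_mul (k := 1) (by omega)
  have h11 := I_mul (k := 11) (by omega)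
  have : I 1 * ((1 - X ^ 13) * I 11 - 1) = X ^ 11 * (1 + X ^ 1) * I 11 := by
    linear_combination I 1 * h11 + (X ^ 11 * (1 + X) * I 11) * h1
  rw [this]
  exact ((Nn.X _).mul (Nn.one.add (Nn.X 1))).mul (Nn.I (by omega))

lemma hA3 (m : ℕ) : Dm (Ga 3 1 m) (A3 * Ph 3 1 m) := by
  cases m with
  | zero =>
    have := Dm.mul Dm_aux3 (Dm_I_one (k := 19) (by omega)) Nn.one (Nn.I (by omega))
    simpa [Ga, Ph, A3] using this
  | succ m =>
    have e1 : Ga 3 1 (m+1) = gg 3 1 * Ga 3 2 m := by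
      rw [Ga, Ga, Finset.prod_range_succ', mul_comm]
      congr 1
      exact Finset.prod_congr rfl fun j _ => by congr 1; omega
    have e2 : Ph 3 1 (m+1) = ff 3 1 * Ph 3 2 m := by
      rw [Ph, Ph, Finset.prod_range_succ', mul_comm]
      congr 1
      exact Finset.prod_congr rfl fun j _ => by congr 1; omega
    have e3 : A3 * Ph 3 1 (m+1) = (I 9 * (I 11 * I 14)) * (I 19 * Ph 3 2 m) := by
      rw [e2, A3, ff]
      norm_num only
      have h13 := I_mul (k := 13) (by omega)
      linear_combination (I 9 * I 11 * I 14 * I 19 * Ph 3 2 m) * h13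
    have e4 : gg 3 1 = I 10 * (I 11 * I 15) := by rw [gg]
    rw [e1, e3, e4]
    refine Dm.mul (Dm.mul (Dm.I (by omega) (by omega)) (Dm.mul (Dm.refl _) (Dm.I (by omega) (by omega)) (Nn.I (by omega)) (Nn.I (by omega))) (Nn.I (by omega)) ((Nn.I (by omega)).mul (Nn.I (by omega)))) (prop_II (y := 3) (by omega) 2 m) ((Nn.I (by omega)).mul ((Nn.I (by omega)).mul (Nn.I (by omega)))) ((Nn.I (by omega)).mul (Nn.Ph (by omega) _ _))

def fc (n : ℕ) : ℕ := it (fun n => n / 5 + 1) 6 n n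
lemma ff3 : ff 3 0 = I 1 * I 5 * I 6 := by rw [ff, mul_assoc]
lemma fc_eq (n : ℕ) : coeff n (ff 3 0) = (fc n : ℚ) := by
  rw [ff3]; exact it_coeff' _ _ (coeff_I1I (by omega)) (by omega) n
lemma fc_rec (n : ℕ) (h : 6 ≤ n) : fc n = n / 5 + 1 + fc (n-6) := by
  have := coeff_I_rec (I 1 * I 5) (k := 6) (by omega) n
  rw [← ff3, if_pos h, fc_eq, fc_eq, coeff_I1I (by omega)] at this
  exact_mod_cast this

noncomputable def K : PowerSeries ℚ := (I 1 * (1 - X ^ 13)) * I 11 * I 19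
def Kc (n : ℕ) : ℕ := it (fun n => it (fun n => if n < 13 then 1 else 0) 11 n n) 19 n n
lemma Kc_eq (n : ℕ) : coeff n K = (Kc n : ℚ) := by
  refine it_coeff' _ _ (it_coeff' _ _ ?_ (by omega)) (by omega) n
  intro n
  rw [mul_sub, mul_one, map_sub, coeff_mul_X_pow', coeff_I1]
  by_cases h : n < 13
  · rw [if_neg (by omega), if_pos h]; simp
  · rw [if_pos (by omega), if_neg h, coeff_I1]; simp
lemma Kc_rec (n : ℕ) (h : 32 ≤ n) :
    Kc n + (n-13)/11 + (n-32)/19 = n/11 + (n-19)/19 + Kc (n-30) := by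
  have e : K = I 1 * I 11 - X ^ 13 * (I 1 * I 11) + X ^ 19 * (I 1 * I 19) - X ^ 32 * (I 1 * I 19) + X ^ 30 * K := by
    have h11 := I_mul (k := 11) (by omega)
    have h19 := I_mul (k := 19) (by omega)
    rw [K]
    linear_combination (I 1 * (1 - X ^ 13) * X ^ 19 * I 19) * h11 + (I 1 * (1 - X ^ 13) * I 11) * h19
  have := congrArg (coeff n) e
  simp only [map_add, map_sub, coeff_X_pow_mul', coeff_I1I (show 0 < 11 by omega), coeff_I1I (show 0 < 19 by omega), Kc_eq] at this
  rw [if_pos (by omega), if_pos (by omega), if_pos (by omega), if_pos (by omega)] at this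
  have h2 : ((Kc n + (n-13)/11 + (n-32)/19 : ℕ) : ℚ) = (n/11 + (n-19)/19 + Kc (n-30) : ℕ) := by
    push_cast at this ⊢; linarith
  exact_mod_cast h2

lemma b3_fin : ∀ n < 62, (if 5 ≤ n then Hc 3 (n-5) else 0) + 5 * Kc n + (if 5 ≤ n then 4 * Kc (n-5) else 0)
    + (if 6 ≤ n then 2 * Kc (n-6) else 0) + (if 10 ≤ n then 2 * Kc (n-10) else 0) + (if 12 ≤ n then 2 * Kc (n-12) else 0)
    ≤ 5 * fc n := by
  decide +kernel

lemma fc_30 (n : ℕ) (h : 30 ≤ n) : fc n = n - 9 + fc (n - 30) := by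
  rw [fc_rec n (by omega), fc_rec (n-6) (by omega), fc_rec (n-6-6) (by omega), fc_rec (n-6-6-6) (by omega),
    fc_rec (n-6-6-6-6) (by omega)]
  simp only [Nat.sub_sub]
  norm_num only
  generalize fc (n-30) = z
  obtain ⟨t, i, hi, rfl⟩ : ∃ t i, i < 5 ∧ n = 5 * t + i + 30 := ⟨(n-30)/5, (n-30)%5, by omega, by omega⟩
  interval_cases i <;> omega

lemma Hc_30 (n : ℕ) (h : 30 ≤ n) : Hc 3 n = 5 * n + 10 - 70 + Hc 3 (n - 30) := by
  have r := fun n h => Hc_rec (y := 3) (by omega) n h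
  rw [r n (by omega), r (n-3) (by omega), r (n-3-3) (by omega), r (n-3-3-3) (by omega), r (n-3-3-3-3) (by omega),
    r (n-3-3-3-3-3) (by omega), r (n-3-3-3-3-3-3) (by omega), r (n-3-3-3-3-3-3-3) (by omega),
    r (n-3-3-3-3-3-3-3-3) (by omega), r (n-3-3-3-3-3-3-3-3-3) (by omega)]
  simp only [Nat.sub_sub]
  norm_num only
  generalize Hc 3 (n-30) = z
  omega

lemma k19 (n : ℕ) (h : 32 ≤ n) : (n-19)/19 ≤ (n-32)/19 + 1 := by omega

lemma k11 (n : ℕ) (h : 32 ≤ n) : 5 * (n/11) + 4 * ((n-5)/11) + 2 * ((n-6)/11) + 2 * ((n-10)/11) + 2 * ((n-12)/11)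
   ≤ 22 + (5 * ((n-13)/11) + 4 * ((n-5-13)/11) + 2 * ((n-6-13)/11) + 2 * ((n-10-13)/11) + 2 * ((n-12-13)/11)) := by
  obtain ⟨t, i, hi, rfl⟩ : ∃ t i, i < 11 ∧ n = 11 * t + i + 32 := ⟨(n-32)/11, (n-32)%11, by omega, by omega⟩
  interval_cases i <;> omega

lemma b3_all (n : ℕ) : (if 5 ≤ n then Hc 3 (n-5) else 0) + 5 * Kc n + (if 5 ≤ n then 4 * Kc (n-5) else 0)
    + (if 6 ≤ n then 2 * Kc (n-6) else 0) + (if 10 ≤ n then 2 * Kc (n-10) else 0) + (if 12 ≤ n then 2 * Kc (n-12) else 0)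
    ≤ 5 * fc n := by
  induction n using Nat.strong_induction_on with
  | _ n ih =>
    rcases lt_or_ge n 62 with h | h
    · exact b3_fin n h
    · have h0 := ih (n-30) (by omega)
      rw [if_pos (by omega), if_pos (by omega), if_pos (by omega), if_pos (by omega), if_pos (by omega)] at h0 ⊢
      have f := fc_30 n (by omega)
      have hh := Hc_30 (n-5) (by omega)
      have k0 := Kc_rec n (by omega)
      have k1 := Kc_rec (n-5) (by omega)
      have k2 := Kc_rec (n-6) (by omega)
      have k3 := Kc_rec (n-10) (by omega)
      have k4 := Kc_rec (n-12) (by omega)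
      have l0 := k19 n (by omega)
      have l1 := k19 (n-5) (by omega)
      have l2 := k19 (n-6) (by omega)
      have l3 := k19 (n-10) (by omega)
      have l4 := k19 (n-12) (by omega)
      have kk := k11 n (by omega)
      rw [show n - 5 - 30 = n - 30 - 5 by omega] at hh k1
      rw [show n - 6 - 30 = n - 30 - 6 by omega] at k2
      rw [show n - 10 - 30 = n - 30 - 10 by omega] at k3
      rw [show n - 12 - 30 = n - 30 - 12 by omega] at k4
      clear ih
      generalize (n-19)/19 = a0 at *
      generalize (n-5-19)/19 = a1 at *
      generalize (n-6-19)/19 = a2 at *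
      generalize (n-10-19)/19 = a3 at *
      generalize (n-12-19)/19 = a4 at *
      generalize (n-32)/19 = b0 at *
      generalize (n-5-32)/19 = b1 at *
      generalize (n-6-32)/19 = b2 at *
      generalize (n-10-32)/19 = b3 at *
      generalize (n-12-32)/19 = b4 at *
      generalize (n-13)/11 = c0 at *
      generalize (n-5-13)/11 = c1 at *
      generalize (n-6-13)/11 = c2 at *
      generalize (n-10-13)/11 = c3 at *
      generalize (n-12-13)/11 = c4 at *
      generalize n/11 = d0 at *
      generalize (n-5)/11 = d1 at *
      generalize (n-6)/11 = d2 at *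
      generalize (n-10)/11 = d3 at *
      generalize (n-12)/11 = d4 at *
      omega

lemma b3 : Nn (ff 3 0 - C (1/5) * X ^ 5 * HH 3 - p3 * I 1 * A3) := by
  have e : p3 * I 1 * A3 = p3 * K := by rw [A3, K]; ring
  rw [e]
  intro n
  simp only [p3, map_add, map_sub, add_mul, mul_assoc, one_mul, coeff_C_mul, coeff_X_pow_mul', Kc_eq,
    Hc_eq (show 1 < 3 by omega), fc_eq]
  have := (Nat.cast_le (α := ℚ)).2 (b3_all n)
  push_cast at this
  split_ifs at this ⊢ <;> first | omega | linarith

lemma fin_3 (m : ℕ) : Nn (ff 3 0 * Ph 3 1 m - gg 3 0 * Ga 3 1 m) := by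
  refine finish (by omega) m _ _ A3 (Nn.P1 (by norm_num) _) ?_ (hA3 m) a3 b3
  exact (((Nn.one.add (Nn.P1 (by norm_num) _)).add (Nn.P1 (by norm_num) _)).add (Nn.P1 (by norm_num) _)).add (Nn.P1 (by norm_num) _)

lemma fin_all {y : ℕ} (hy : 1 < y) (hyo : Odd y) (m : ℕ) : Nn (ff y 0 * Ph y 1 m - gg y 0 * Ga y 1 m) := by
  rcases le_or_gt 7 y with h | h
  · exact fin_7 h hyo m
  · obtain ⟨k, hk⟩ := hyo
    have : y = 3 ∨ y = 5 := by omega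
    rcases this with rfl | rfl
    · exact fin_3 m
    · exact fin_5 m

end BG

theorem berkovich_grizzell_x_version (L x y : ℕ) (hL : 0 < L) (hy : 1 < y) (hyo : Odd y)
    (hx1 : 1 < x) (hx2 : x ≤ y + 2) (n : ℕ) :
    0 ≤ PowerSeries.coeff (R := ℚ) n
      ((∏ j ∈ Finset.range L,
          (1 - (PowerSeries.X : PowerSeries ℚ) ^ (1 + j * (2 * y + 2))) *
          ((1 - (PowerSeries.X : PowerSeries ℚ) ^ (x + j * (2 * y + 2))) *
           (1 - (PowerSeries.X : PowerSeries ℚ) ^ (2 * y + j * (2 * y + 2)))))⁻¹ -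
       (∏ j ∈ Finset.range L,
          (1 - (PowerSeries.X : PowerSeries ℚ) ^ (2 + j * (2 * y + 2))) *
          ((1 - (PowerSeries.X : PowerSeries ℚ) ^ (y + j * (2 * y + 2))) *
           (1 - (PowerSeries.X : PowerSeries ℚ) ^ (2 * y + 1 + j * (2 * y + 2)))))⁻¹) := by
  obtain ⟨m, rfl⟩ : ∃ m, L = m + 1 := ⟨L - 1, by omega⟩
  rw [BG.inv_prod _ _ _ _ _ (by omega) (by omega) (by omega), BG.inv_prod _ _ _ _ _ (by omega) (by omega) (by omega)]
  exact BG.I_finish hy hx1 hx2 m (BG.fin_all hy hyo m) n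
end

section
/- (Berkovich–Grizzell) Let m, n, y, z be positive integers with gcd(n, y) = 1, and let K, L be integers with K ≥ L ≥ 0. In the ring of formal power series over ℚ in one variable q, write a(k) for the coefficients of ((∏_{j=0}^{K−1} (1 − q^{z+jm})) · (∏_{j=0}^{L−1} (1 − q^{nyz+jnm})))⁻¹ − ((∏_{j=0}^{K−1} (1 − q^{yz+jm})) · (∏_{j=0}^{L−1} (1 − q^{nz+jnm})))⁻¹ = Σ_{k≥0} a(k) q^k. Then a(k) ≥ 0 for all k ≥ 0. -/
open PowerSeries

namespace BG

def NN (f : PowerSeries ℚ) : Prop := ∀ k, 0 ≤ PowerSeries.coeff k f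

noncomputable def g (e : ℕ) : PowerSeries ℚ := (1 - (PowerSeries.X : PowerSeries ℚ) ^ e)⁻¹

noncomputable def P (n e : ℕ) : PowerSeries ℚ := ∑ i ∈ Finset.range n, (X : PowerSeries ℚ) ^ (e * i)

lemma NN.add {f h : PowerSeries ℚ} (hf : NN f) (hh : NN h) : NN (f + h) := by
  intro k; rw [map_add]; exact add_nonneg (hf k) (hh k)

lemma NN.mul {f h : PowerSeries ℚ} (hf : NN f) (hh : NN h) : NN (f * h) := by
  intro k; rw [PowerSeries.coeff_mul]
  exact Finset.sum_nonneg fun p _ => mul_nonneg (hf _) (hh _)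

lemma NN_X (e : ℕ) : NN ((X : PowerSeries ℚ) ^ e) := by
  intro k; rw [PowerSeries.coeff_X_pow]; split_ifs <;> norm_num

lemma NN_one : NN 1 := by simpa using NN_X 0

lemma NN_zero : NN 0 := by intro k; simp

lemma NN_sum {s : Finset ℕ} {f : ℕ → PowerSeries ℚ} (h : ∀ i, NN (f i)) : NN (∑ i ∈ s, f i) := by
  intro k; rw [map_sum]; exact Finset.sum_nonneg fun i _ => h i k

lemma cc {e : ℕ} (he : 0 < e) : constantCoeff (1 - (X : PowerSeries ℚ) ^ e) ≠ 0 := by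
  simp [he.ne']

lemma g_mul {e : ℕ} (he : 0 < e) : g e * (1 - (X : PowerSeries ℚ) ^ e) = 1 :=
  PowerSeries.inv_mul_cancel _ (cc he)

lemma g_eq {e : ℕ} (he : 0 < e) : g e = PowerSeries.mk fun k => if e ∣ k then (1 : ℚ) else 0 := by
  have h : (PowerSeries.mk fun k => if e ∣ k then (1 : ℚ) else 0) * (1 - X ^ e) = 1 := by
    ext k
    rw [mul_sub, mul_one, map_sub, PowerSeries.coeff_mul_X_pow', PowerSeries.coeff_one]
    simp only [PowerSeries.coeff_mk]
    rcases Nat.lt_or_ge k e with h | h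
    · rw [if_neg (not_le.mpr h)]
      by_cases hk : k = 0
      · simp [hk]
      · simp [hk, Nat.not_dvd_of_pos_of_lt (Nat.pos_of_ne_zero hk) h]
    · rw [if_pos h]
      have : k ≠ 0 := by omega
      have h2 : e ∣ k - e ↔ e ∣ k := by
        rw [← Nat.dvd_add_self_right (m := e) (n := k - e), Nat.sub_add_cancel h]
      simp only [h2, this, if_false, sub_self]
  calc g e = g e * ((PowerSeries.mk fun k => if e ∣ k then (1 : ℚ) else 0) * (1 - X ^ e)) := by
        rw [h, mul_one]
    _ = (g e * (1 - X ^ e)) * (PowerSeries.mk fun k => if e ∣ k then (1 : ℚ) else 0) := by ring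
    _ = _ := by rw [g_mul he, one_mul]

lemma NN_g {e : ℕ} (he : 0 < e) : NN (g e) := by
  intro k; rw [g_eq he, PowerSeries.coeff_mk]; split_ifs <;> norm_num

lemma P_mul (n e : ℕ) : P n e * (1 - X ^ e) = 1 - X ^ (n * e) := by
  have := geom_sum_mul_neg ((X : PowerSeries ℚ) ^ e) n
  simp only [← pow_mul] at this
  rw [P, this, mul_comm n e]

lemma g_P {n e : ℕ} (hn : 0 < n) (he : 0 < e) : g e = P n e * g (n * e) := by
  have h1 := g_mul he
  have h2 := g_mul (Nat.mul_pos hn he)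
  have h3 := P_mul n e
  calc g e = g e * (g (n*e) * (1 - X ^ (n*e))) := by rw [h2, mul_one]
    _ = g e * (g (n*e) * (P n e * (1 - X ^ e))) := by rw [h3]
    _ = (g e * (1 - X ^ e)) * (P n e * g (n * e)) := by ring
    _ = _ := by rw [h1, one_mul]

lemma NN_one_sub {z : ℕ} (hz : 0 < z) (c : ℕ) : NN ((1 - X ^ (c * z)) * g z) := by
  have : (1 - X ^ (c * z)) * g z = P c z := by
    rw [← P_mul c z, mul_assoc, mul_comm _ (g z), g_mul hz, mul_one]
  rw [this]; exact NN_sum fun i => NN_X _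

/-- dominance with margin -/
def T (z : ℕ) (a b : PowerSeries ℚ) : Prop := NN a ∧ NN b ∧ NN ((a - b) * g z)

lemma T.mul {z : ℕ} {a b c d : PowerSeries ℚ} (h : T z a b) (h' : T z c d) :
    T z (a * c) (b * d) := by
  refine ⟨h.1.mul h'.1, h.2.1.mul h'.2.1, ?_⟩
  have : (a * c - b * d) * g z = a * ((c - d) * g z) + ((a - b) * g z) * d := by ring
  rw [this]
  exact (h.1.mul h'.2.2).add (h.2.2.mul h'.2.1)

lemma T.prod {z : ℕ} {a b : ℕ → PowerSeries ℚ} (N : ℕ) (h : ∀ j, T z (a j) (b j)) :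
    T z (∏ j ∈ Finset.range N, a j) (∏ j ∈ Finset.range N, b j) := by
  induction N with
  | zero => exact ⟨by simpa using NN_one, by simpa using NN_one, by simpa using NN_zero⟩
  | succ N ih => rw [Finset.prod_range_succ, Finset.prod_range_succ]; exact ih.mul (h N)

lemma T_single {z u c : ℕ} (hz : 0 < z) (hu : 0 < u) : T z (g u) (g (u + c * z)) := by
  have hv : 0 < u + c * z := by omega
  refine ⟨NN_g hu, NN_g hv, ?_⟩
  have h1 := g_mul hu
  have h2 := g_mul hv
  have : g u - g (u + c * z) = g u * g (u + c * z) * (X ^ u * (1 - X ^ (c * z))) := by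
    have e : (X : PowerSeries ℚ) ^ u * (1 - X ^ (c * z)) =
      (1 - X ^ (u + c * z)) - (1 - X ^ u) := by rw [pow_add]; ring
    rw [e]
    linear_combination (-(g u)) * h2 + g (u + c * z) * h1
  rw [this]
  have e : g u * g (u + c * z) * (X ^ u * (1 - X ^ (c * z))) * g z =
    (g u * g (u + c * z) * X ^ u) * ((1 - X ^ (c * z)) * g z) := by ring
  rw [e]
  exact (((NN_g hu).mul (NN_g hv)).mul (NN_X _)).mul (NN_one_sub hz c)

lemma T_double {z u c n : ℕ} (hz : 0 < z) (hu : 0 < u) (hn : 0 < n) :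
    T z (g u * g (n * (u + c * z))) (g (u + c * z) * g (n * u)) := by
  have hv : 0 < u + c * z := by omega
  have hnu := NN_g (Nat.mul_pos hn hu)
  have hnv := NN_g (Nat.mul_pos hn hv)
  refine ⟨(NN_g hu).mul hnv, (NN_g hv).mul hnu, ?_⟩
  have e : (g u * g (n * (u + c * z)) - g (u + c * z) * g (n * u)) * g z =
      (g (n * u) * g (n * (u + c * z))) * ((P n u - P n (u + c * z)) * g z) := by
    rw [g_P hn hu, g_P hn hv]; ring
  rw [e]
  refine (hnu.mul hnv).mul ?_
  rw [P, P, ← Finset.sum_sub_distrib, Finset.sum_mul]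
  refine NN_sum fun i => ?_
  have e : ((X : PowerSeries ℚ) ^ (u * i) - X ^ ((u + c * z) * i)) * g z =
      X ^ (u * i) * ((1 - X ^ ((c * i) * z)) * g z) := by
    rw [show (u + c * z) * i = u * i + (c * i) * z by ring, pow_add]; ring
  rw [e]
  exact (NN_X _).mul (NN_one_sub hz _)

lemma zero_double {n y z : ℕ} (hn : 0 < n) (hy : 0 < y) (hz : 0 < z) (hc : Nat.Coprime n y) :
    NN (g z * g (n * (y * z)) - g (y * z) * g (n * z)) := by
  have hyz := Nat.mul_pos hy hz
  have hnz := Nat.mul_pos hn hz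
  have e : g z * g (n * (y * z)) - g (y * z) * g (n * z) =
      (g z - P n (y * z) * g (n * z)) * g (n * (y * z)) := by
    rw [g_P hn hyz]; ring
  rw [e]
  refine NN.mul ?_ (NN_g (Nat.mul_pos hn hyz))
  intro k
  rw [map_sub, sub_nonneg, P, Finset.sum_mul, map_sum, g_eq hz, g_eq hnz]
  simp only [PowerSeries.coeff_X_pow_mul', PowerSeries.coeff_mk, ← ite_and]
  rw [Finset.sum_boole]
  have key : ∀ i, (y * z * i ≤ k ∧ n * z ∣ k - y * z * i) → ∃ t, k = z * (y * i + n * t) := by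
    rintro i ⟨h1, t, ht⟩
    refine ⟨t, ?_⟩
    have : k = y * z * i + n * z * t := by omega
    rw [this]; ring
  split_ifs with hk
  · have : (Finset.filter (fun i => y * z * i ≤ k ∧ n * z ∣ k - y * z * i)
        (Finset.range n)).card ≤ 1 := by
      rw [Finset.card_le_one]
      intro a ha b hb
      simp only [Finset.mem_filter, Finset.mem_range] at ha hb
      obtain ⟨t, ht⟩ := key a ha.2
      obtain ⟨s, hs⟩ := key b hb.2
      have h : y * a + n * t = y * b + n * s :=
        Nat.eq_of_mul_eq_mul_left hz (ht.symm.trans hs)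
      have h2 : y * a ≡ y * b [MOD n] := by
        have := congrArg (· % n) h
        simpa [Nat.ModEq, Nat.add_mul_mod_self_left] using this
      have h3 : a ≡ b [MOD n] := Nat.ModEq.cancel_left_of_coprime hc h2
      exact Nat.ModEq.eq_of_lt_of_lt h3 ha.1 hb.1
    exact_mod_cast this
  · rw [Finset.filter_false_of_mem]
    · simp
    · intro i _ h
      obtain ⟨t, ht⟩ := key i h
      exact hk ⟨_, ht⟩

lemma combine {z : ℕ} {a b r A B : PowerSeries ℚ} (hr : NN r) (ha : a = g z * r)
    (hab : NN (a - b)) (h : T z A B) : NN (a * A - b * B) := by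
  have e : a * A - b * B = (a - b) * B + r * ((A - B) * g z) := by rw [ha]; ring
  rw [e]
  exact (hab.mul h.2.1).add (hr.mul h.2.2)

lemma prod_inv (N : ℕ) (f : ℕ → ℕ) :
    (∏ j ∈ Finset.range N, (1 - (X : PowerSeries ℚ) ^ f j))⁻¹ = ∏ j ∈ Finset.range N, g (f j) := by
  induction N with
  | zero => simp
  | succ N ih =>
    rw [Finset.prod_range_succ, Finset.prod_range_succ, PowerSeries.mul_inv_rev, ih, mul_comm]; rfl

lemma main (m n c z L d : ℕ) (hn : 0 < n) (hz : 0 < z)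
    (hny : Nat.Coprime n (c + 1)) :
    NN ((∏ j ∈ Finset.range (L + d), g (z + j * m)) *
        (∏ j ∈ Finset.range L, g (n * ((z + j * m) + c * z))) -
       (∏ j ∈ Finset.range (L + d), g ((z + j * m) + c * z)) *
        (∏ j ∈ Finset.range L, g (n * (z + j * m)))) := by
  have hu : ∀ j, 0 < z + j * m := fun j => by omega
  cases L with
  | zero =>
    cases d with
    | zero => simpa using NN_zero
    | succ d =>
      have h := T.prod d (fun j => T_single (c := c) hz (hu (j + 1)))
      have h0 : NN (g z - g (z + c * z)) := by
        have e : z + c * z = (c + 1) * z := by ring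
        intro k
        rw [e, g_eq hz, g_eq (Nat.mul_pos c.succ_pos hz), map_sub, coeff_mk, coeff_mk, sub_nonneg]
        split_ifs with h1 h2 <;> norm_num
        exact h2 ((Dvd.intro_left _ rfl).trans h1)
      have := combine NN_one (mul_one _).symm h0 h
      simp only [Finset.prod_range_zero, mul_one, zero_add, Finset.prod_range_succ', zero_mul,
        add_zero]
      convert this using 1
      ring
  | succ L =>
    have h1 := T.prod L (fun j => T_double (c := c) hz (hu (j + 1)) hn)
    have h2 := T.prod d (fun j => T_single (c := c) hz (hu (L + 1 + j)))
    have h0 := zero_double hn c.succ_pos hz hny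
    have := combine (NN_g (Nat.mul_pos hn (Nat.mul_pos c.succ_pos hz))) rfl h0 (h1.mul h2)
    rw [Finset.prod_mul_distrib, Finset.prod_mul_distrib] at this
    rw [Finset.prod_range_add (fun j => g (z + j * m)),
      Finset.prod_range_add (fun j => g (z + j * m + c * z))]
    rw [Finset.prod_range_succ' (fun j => g (z + j * m)),
      Finset.prod_range_succ' (fun j => g (z + j * m + c * z))]
    simp only [Finset.prod_range_succ', zero_mul, add_zero]
    rw [show c.succ * z = z + c * z by rw [Nat.succ_mul]; ring] at this
    convert this using 1
    ring

end BG

theorem berkovich_grizzell_two_moduli (m n y z : ℕ) (K L : ℕ)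
    (hm : 0 < m) (hn : 0 < n) (hy : 0 < y) (hz : 0 < z)
    (hny : Nat.Coprime n y) (hKL : L ≤ K) (k : ℕ) :
    0 ≤ PowerSeries.coeff (R := ℚ) k
      (((∏ j ∈ Finset.range K,
          (1 - (PowerSeries.X : PowerSeries ℚ) ^ (z + j * m))) *
        (∏ j ∈ Finset.range L,
          (1 - (PowerSeries.X : PowerSeries ℚ) ^ (n * y * z + j * (n * m)))))⁻¹ -
       ((∏ j ∈ Finset.range K,
          (1 - (PowerSeries.X : PowerSeries ℚ) ^ (y * z + j * m))) *
        (∏ j ∈ Finset.range L,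
          (1 - (PowerSeries.X : PowerSeries ℚ) ^ (n * z + j * (n * m)))))⁻¹) := by
  obtain ⟨d, rfl⟩ := Nat.exists_eq_add_of_le hKL
  obtain ⟨c, rfl⟩ := Nat.exists_eq_add_of_le' hy
  have h := BG.main m n c z L d hn hz hny k
  rw [PowerSeries.mul_inv_rev, PowerSeries.mul_inv_rev, BG.prod_inv, BG.prod_inv, BG.prod_inv,
    BG.prod_inv]
  have e1 : ∀ j, n * (c + 1) * z + j * (n * m) = n * ((z + j * m) + c * z) := fun j => by ring
  have e2 : ∀ j, (c + 1) * z + j * m = (z + j * m) + c * z := fun j => by ring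
  have e3 : ∀ j, n * z + j * (n * m) = n * (z + j * m) := fun j => by ring
  simp only [e1, e2, e3]
  rw [mul_comm, mul_comm (∏ j ∈ Finset.range L, BG.g (n * (z + j * m)))]
  exact h
end
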